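/- Let y ≥ 2 be a real number, let k be a positive integer, let a_1, ..., a_{2k}, A be fixed positive real numbers, and let q > 1 be an integer such that every Dirichlet L-function modulo q satisfies the Riemann Hypothesis. Let t_1, ..., t_{2k} be real numbers with |t_j| ≤ q^A. Then there is a constant B depending only on k, A and the a_j (but not on q, y or the t_j) such that ∑_{χ ∈ X_q^*} |L(1/2 + 1/log y + it_1, χ)|^{a_1} ⋯ |L(1/2 + 1/log y + it_{2k}, χ)|^{a_{2k}} ≤ φ(q) · (min{log y + 1, log q})^{B}. -/

import Mathlib

open Complex Real Finset

def dirichletRH {q : ℕ} [NeZero q] (χ : DirichletCharacter ℂ q) : Prop :=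
  ∀ s : ℂ, 0 < s.re → s.re < 1 → DirichletCharacter.LFunction χ s = 0 → s.re = 1 / 2
open Complex Real Finset

namespace Stmt5

lemma gamma_step (w : ℂ) (hw : 0 < w.re) (h : ℝ) (h0 : 0 ≤ h) (h1 : h ≤ 1) :
    ‖w‖ * (‖w + 1‖ / (‖w‖ * Real.exp (1 / w.re ^ 2))) ^ h ≤ ‖w + h‖ := by
  set a := w.re with ha
  have hN : ∀ r : ℝ, ‖w + r‖ ^ 2 = ‖w‖ ^ 2 + 2 * r * a + r ^ 2 := by
    intro r
    rw [Complex.sq_norm, Complex.sq_norm, Complex.normSq_apply, Complex.normSq_apply]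
    simp [ha]; ring
  have haw : a ≤ ‖w‖ := (le_abs_self _).trans (Complex.abs_re_le_norm w)
  have hwpos : 0 < ‖w‖ := lt_of_lt_of_le hw haw
  set n := ‖w‖ with hn
  set r := a / n ^ 2 with hr
  have hr0 : 0 ≤ r := by positivity
  have e1 : n * (1 + h * r) ≤ ‖w + h‖ := by
    apply le_of_sq_le_sq _ (norm_nonneg _)
    rw [hN h, mul_pow]
    have : n ^ 2 * (1 + h * r) ^ 2 = n ^ 2 + 2 * h * a + h ^ 2 * (a ^ 2 / n ^ 2) := by
      rw [hr]; field_simp; ring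
    rw [this]
    have : a ^ 2 / n ^ 2 ≤ 1 := by
      rw [div_le_one (by positivity)]; gcongr
    nlinarith [sq_nonneg h]
  have e2 : ‖w + 1‖ / (n * Real.exp (1 / a ^ 2)) ≤ 1 + r := by
    rw [div_le_iff₀ (by positivity)]
    apply le_of_sq_le_sq _ (by positivity)
    have := hN 1
    simp only [Complex.ofReal_one] at this
    rw [this]
    have hexp : 1 + 1 / n ^ 2 ≤ Real.exp (1 / a ^ 2) ^ 2 := by
      rw [← Real.exp_nat_mul]
      have h1 := Real.add_one_le_exp ((2 : ℕ) * (1 / a ^ 2))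
      have h2 : 1 / n ^ 2 ≤ 1 / a ^ 2 := by gcongr
      have h3 : 0 ≤ 1 / a ^ 2 := by positivity
      push_cast at h1 ⊢
      linarith
    calc n ^ 2 + 2 * 1 * a + 1 ^ 2 ≤ (n + a / n) ^ 2 * (1 + 1 / n ^ 2) := by
          have : (n + a / n) ^ 2 * (1 + 1 / n ^ 2)
            = n ^ 2 + 2 * a + 1 + (a ^ 2 / n ^ 2 + (2 * a + a ^ 2 / n ^ 2) / n ^ 2) := by
            field_simp; ring
          rw [this]
          have : 0 ≤ (a ^ 2 / n ^ 2 + (2 * a + a ^ 2 / n ^ 2) / n ^ 2) := by positivity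
          linarith
      _ ≤ (n + a / n) ^ 2 * Real.exp (1 / a ^ 2) ^ 2 := by gcongr
      _ = _ := by rw [hr]; field_simp
  refine le_trans ?_ e1
  gcongr
  calc _ ≤ (1 + r) ^ h := by gcongr
    _ ≤ 1 + h * r := rpow_one_add_le_one_add_mul_self (by linarith) h0 h1

lemma gamma_ratio : ∃ C : ℝ, 1 ≤ C ∧ ∀ z : ℂ, 1 / 8 ≤ z.re → ∀ h : ℝ, 0 ≤ h → h ≤ 1 →
    ‖Complex.Gamma (z + h)‖ ≤ (C * ‖z‖) ^ h * ‖Complex.Gamma z‖ := by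
  have hs : Summable (fun j : ℕ => 1 / ((1 : ℝ) / 8 + j) ^ 2) := by
    have := (Real.summable_one_div_nat_add_rpow (1 / 8) 2).2 (by norm_num)
    refine this.congr fun j => ?_
    rw [add_comm, abs_of_nonneg (by positivity)]
    norm_num
  set S := ∑' j : ℕ, 1 / ((1 : ℝ) / 8 + j) ^ 2
  have hS0 : 0 ≤ S := tsum_nonneg fun j => by positivity
  refine ⟨Real.exp S, Real.one_le_exp hS0, fun z hz h h0 h1 => ?_⟩
  have hre : ∀ j : ℕ, (1:ℝ) / 8 + j ≤ (z + j).re := fun j => by simp; linarith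
  have hpos : ∀ j : ℕ, 0 < ‖z + j‖ := fun j =>
    lt_of_lt_of_le (lt_of_lt_of_le (by positivity) (hre j))
      ((le_abs_self _).trans (Complex.abs_re_le_norm _))
  have hprod : ∀ n : ℕ, (∏ j ∈ range n, ‖z + j‖) *
      (‖z + n‖ / (‖z‖ * Real.exp (∑ j ∈ range n, 1 / ((1 : ℝ) / 8 + j) ^ 2))) ^ h
        ≤ ∏ j ∈ range n, ‖z + h + j‖ := by
    intro n
    induction n with
    | zero =>
      have := hpos 0
      simp only [Nat.cast_zero, add_zero] at this
      simp [this.ne']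
    | succ n ih =>
      rw [prod_range_succ, prod_range_succ, sum_range_succ, Real.exp_add]
      have st := gamma_step (z + n) (lt_of_lt_of_le (by positivity) (hre n)) h h0 h1
      have st' : ‖z + n‖ * (‖z + n + 1‖ / (‖z + n‖ * Real.exp (1 / ((1 : ℝ) / 8 + n) ^ 2))) ^ h
          ≤ ‖z + h + n‖ := by
        refine le_trans ?_ (st.trans_eq (by congr 1; ring))
        have hh := hre n
        have := hpos n
        gcongr
      refine le_trans (le_of_eq ?_) (mul_le_mul ih st' (by positivity)
        (prod_nonneg fun _ _ => norm_nonneg _))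
      rw [mul_mul_mul_comm, ← Real.mul_rpow (by positivity) (by positivity)]
      congr 2
      have h1 := (hpos n).ne'
      have h2 := hpos 0
      simp only [Nat.cast_zero, add_zero] at h2
      push_cast
      rw [← add_assoc]
      field_simp
  have hz0 := hpos 0
  simp only [Nat.cast_zero, add_zero] at hz0
  have key : ∀ n : ℕ, 1 ≤ n → ‖Complex.GammaSeq (z + h) n‖ ≤
      (Real.exp S * ‖z‖) ^ h * ‖Complex.GammaSeq z n‖ := by
    intro n hn
    have hnr : (0:ℝ) < n := by exact_mod_cast hn
    unfold Complex.GammaSeq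
    rw [norm_div, norm_div, norm_mul, norm_mul, norm_prod, norm_prod,
      Complex.norm_natCast_cpow_of_pos hn, Complex.norm_natCast_cpow_of_pos hn]
    have hP := hprod (n + 1)
    set P := ∏ j ∈ range (n + 1), ‖z + j‖
    have hPpos : 0 < P := prod_pos fun j _ => hpos j
    set Q := ∏ j ∈ range (n + 1), ‖z + h + j‖
    have hQ : P * (n / (‖z‖ * Real.exp S)) ^ h ≤ Q := by
      refine le_trans ?_ hP
      gcongr
      · have h1 := (le_abs_self _).trans (Complex.abs_re_le_norm (z + (n + 1 : ℕ)))
        have h2 := hre (n + 1)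
        push_cast at h1 h2 ⊢
        linarith
      · exact hs.sum_le_tsum _ fun j _ => by positivity
    have hQpos : 0 < P * (n / (‖z‖ * Real.exp S)) ^ h := by positivity
    rw [Complex.add_re, Complex.ofReal_re, Real.rpow_add hnr]
    calc _ ≤ (n : ℝ) ^ z.re * (n : ℝ) ^ h * ‖(n.factorial : ℂ)‖ / (P * (n / (‖z‖ * Real.exp S)) ^ h) := by
          gcongr
      _ = _ := by
          rw [Real.div_rpow (by positivity) (by positivity), mul_comm (Real.exp S)]
          have : (0:ℝ) < (n : ℝ) ^ h := by positivity
          field_simp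
  have l1 := (Complex.GammaSeq_tendsto_Gamma (z + h)).norm
  have l2 := ((Complex.GammaSeq_tendsto_Gamma z).norm).const_mul ((Real.exp S * ‖z‖) ^ h)
  exact le_of_tendsto_of_tendsto l1 l2
    (Filter.eventually_atTop.2 ⟨1, fun n hn => key n hn⟩)

end Stmt5

open Complex Real Finset
namespace Stmt5

lemma L_conj_aux {q : ℕ} [NeZero q] (χ : DirichletCharacter ℂ q) (s : ℂ) (hs : 1 < s.re) :
    DirichletCharacter.LFunction χ⁻¹ s = star (DirichletCharacter.LFunction χ (star s)) := by
  rw [DirichletCharacter.LFunction_eq_LSeries _ hs,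
    DirichletCharacter.LFunction_eq_LSeries _ (by simpa using hs)]
  simp only [LSeries]
  rw [tsum_star]
  congr 1
  ext n
  rcases eq_or_ne n 0 with rfl | hn
  · simp
  · rw [LSeries.term_of_ne_zero hn, LSeries.term_of_ne_zero hn, star_div₀, MulChar.star_apply']
    congr 1
    have h2 : star ((n : ℂ) ^ s) = (n : ℂ) ^ (star s) := by
      have := Complex.cpow_conj (n : ℂ) s (by rw [Complex.natCast_arg]; exact Real.pi_pos.ne)
      simp only [Complex.conj_natCast] at this
      exact this.symm
    rw [← h2, star_star]

lemma L_conj {q : ℕ} [NeZero q] (χ : DirichletCharacter ℂ q) (hχ : χ ≠ 1) (s : ℂ) :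
    DirichletCharacter.LFunction χ⁻¹ s = star (DirichletCharacter.LFunction χ (star s)) := by
  have hχ' : χ⁻¹ ≠ 1 := by simpa using hχ
  have d1 : Differentiable ℂ (DirichletCharacter.LFunction χ⁻¹) :=
    DirichletCharacter.differentiable_LFunction hχ'
  have d2 : Differentiable ℂ (fun s => star (DirichletCharacter.LFunction χ (star s))) := by
    intro z
    have := (differentiableAt_conj_conj_iff (𝕜 := ℂ) (f := DirichletCharacter.LFunction χ)
      (x := z)).2 (DirichletCharacter.differentiable_LFunction hχ _)
    exact this
  have a1 : AnalyticOnNhd ℂ (DirichletCharacter.LFunction χ⁻¹) Set.univ := fun z _ => d1.analyticAt z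
  have a2 : AnalyticOnNhd ℂ (fun s => star (DirichletCharacter.LFunction χ (star s))) Set.univ :=
    fun z _ => d2.analyticAt z
  have := a1.eq_of_eventuallyEq a2 (z₀ := 2) (by
    have : {z : ℂ | 1 < z.re} ∈ nhds (2:ℂ) :=
      (isOpen_lt continuous_const Complex.continuous_re).mem_nhds (by simp)
    filter_upwards [this] with z hz
    exact L_conj_aux χ z hz)
  exact congrFun this s

lemma Gammaℝ_conj (s : ℂ) : Gammaℝ (star s) = star (Gammaℝ s) := by
  rw [Gammaℝ_def, Gammaℝ_def]
  have h1 : Gamma (star s / 2) = star (Gamma (s/2)) := by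
    have := Complex.Gamma_conj (s/2)
    simpa [Complex.conj_ofNat] using this
  have h2 : (π : ℂ) ^ (-star s / 2) = star ((π : ℂ) ^ (- s / 2)) := by
    have := Complex.cpow_conj (π : ℂ) (-s/2) (by
      rw [Complex.arg_ofReal_of_nonneg Real.pi_pos.le]; exact Real.pi_pos.ne)
    simpa [Complex.conj_ofNat] using this
  rw [h1, h2, star_mul']

lemma even_inv {q : ℕ} (χ : DirichletCharacter ℂ q) : χ⁻¹.Even ↔ χ.Even := by
  have : χ⁻¹ (-1) = (χ (-1))⁻¹ := by
    rw [MulChar.inv_apply_eq_inv']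
  simp [DirichletCharacter.Even, this]

lemma gammaFactor_inv {q : ℕ} (χ : DirichletCharacter ℂ q) (s : ℂ) :
    DirichletCharacter.gammaFactor χ⁻¹ s = DirichletCharacter.gammaFactor χ s := by
  simp only [DirichletCharacter.gammaFactor]
  by_cases h : χ.Even
  · rw [if_pos h, if_pos ((even_inv χ).2 h)]
  · rw [if_neg h, if_neg (fun h' => h ((even_inv χ).1 h'))]

lemma gammaFactor_conj {q : ℕ} (χ : DirichletCharacter ℂ q) (s : ℂ) :
    DirichletCharacter.gammaFactor χ (star s) = star (DirichletCharacter.gammaFactor χ s) := by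
  simp only [DirichletCharacter.gammaFactor]
  split_ifs
  · exact Gammaℝ_conj s
  · rw [← Gammaℝ_conj]; simp

lemma gammaFactor_ne_zero {q : ℕ} (χ : DirichletCharacter ℂ q) (s : ℂ) (hs : 0 < s.re) :
    DirichletCharacter.gammaFactor χ s ≠ 0 := by
  simp only [DirichletCharacter.gammaFactor]
  split_ifs
  · exact Gammaℝ_ne_zero_of_re_pos hs
  · exact Gammaℝ_ne_zero_of_re_pos (by simp; linarith)

lemma primitive_inv {q : ℕ} (χ : DirichletCharacter ℂ q) (h : χ.IsPrimitive) :
    χ⁻¹.IsPrimitive := by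
  rw [DirichletCharacter.isPrimitive_def] at *
  have : χ⁻¹.conductorSet = χ.conductorSet := by
    ext d
    simp only [DirichletCharacter.conductorSet, Set.mem_ofPred_eq, DirichletCharacter.FactorsThrough]
    constructor
    · rintro ⟨h, χ0, e⟩
      exact ⟨h, χ0⁻¹, by rw [map_inv, ← e, inv_inv]⟩
    · rintro ⟨h, χ0, e⟩
      exact ⟨h, χ0⁻¹, by rw [map_inv, ← e]⟩
  rw [DirichletCharacter.conductor] at *
  rw [this, h]

lemma primitive_ne_one {q : ℕ} [NeZero q] (hq : q ≠ 1) (χ : DirichletCharacter ℂ q) (h : χ.IsPrimitive) :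
    χ ≠ 1 := by
  rintro rfl
  rw [DirichletCharacter.isPrimitive_def, DirichletCharacter.conductor_one] at h
  exact hq h.symm

lemma L_ne_zero_right {q : ℕ} [NeZero q] (χ : DirichletCharacter ℂ q) (hχ : χ ≠ 1)
    (hR : dirichletRH χ) (s : ℂ) (hs : 1/2 < s.re) : DirichletCharacter.LFunction χ s ≠ 0 := by
  intro h0
  rcases lt_or_ge s.re 1 with h | h
  · have := hR s (by linarith) h h0
    linarith
  · exact DirichletCharacter.LFunction_ne_zero_of_one_le_re χ (Or.inl hχ) h h0


lemma completed_eq {q : ℕ} [NeZero q] (χ : DirichletCharacter ℂ q) (s : ℂ) (hs : 0 < s.re) :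
    DirichletCharacter.completedLFunction χ s =
      DirichletCharacter.LFunction χ s * DirichletCharacter.gammaFactor χ s := by
  rw [DirichletCharacter.LFunction_eq_completed_div_gammaFactor χ s
    (Or.inl (by rintro rfl; simp at hs)), div_mul_cancel₀ _ (gammaFactor_ne_zero χ s hs)]

lemma completed_norm_inv {q : ℕ} [NeZero q] (χ : DirichletCharacter ℂ q) (hχ : χ ≠ 1)
    (s : ℂ) (hs : 0 < s.re) :
    ‖DirichletCharacter.completedLFunction χ⁻¹ s‖ =
      ‖DirichletCharacter.LFunction χ (star s)‖ * ‖DirichletCharacter.gammaFactor χ (star s)‖ := by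
  rw [completed_eq _ _ hs, L_conj χ hχ, gammaFactor_inv, norm_mul, norm_star, gammaFactor_conj,
    norm_star]

lemma norm_root {q : ℕ} [NeZero q] (hq : q ≠ 1) (χ : DirichletCharacter ℂ q) (h : χ.IsPrimitive)
    (hR : dirichletRH χ) : ‖DirichletCharacter.rootNumber χ‖ = 1 := by
  have hχ := primitive_ne_one hq χ h
  have h' := primitive_inv χ h
  have hχ' : χ⁻¹ ≠ 1 := by simpa using hχ
  have q0 : (0:ℝ) < q := by exact_mod_cast Nat.pos_of_ne_zero (NeZero.ne q)
  have qc : (q:ℂ) ≠ 0 := by exact_mod_cast (NeZero.ne q)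
  -- product one
  have e1 := h.completedLFunction_one_sub (3/4)
  have e2 := h'.completedLFunction_one_sub (1 - 3/4)
  have e3 := h'.completedLFunction_one_sub (3/4)
  rw [inv_inv] at e2 e3
  have n1 : 0 < ‖DirichletCharacter.completedLFunction χ (3/4)‖ := by
    rw [norm_pos_iff, completed_eq _ _ (by norm_num)]
    exact mul_ne_zero (L_ne_zero_right χ hχ hR _ (by norm_num)) (gammaFactor_ne_zero _ _ (by norm_num))
  have n2 : ‖DirichletCharacter.completedLFunction χ⁻¹ (3/4)‖ =
      ‖DirichletCharacter.completedLFunction χ (3/4)‖ := by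
    rw [completed_norm_inv χ hχ _ (by norm_num), completed_eq _ _ (by norm_num), norm_mul]
    simp [Complex.conj_ofNat]
  have n3 : ‖DirichletCharacter.completedLFunction χ⁻¹ (1 - 3/4)‖ =
      ‖DirichletCharacter.completedLFunction χ (1 - 3/4)‖ := by
    rw [completed_norm_inv χ hχ _ (by norm_num), completed_eq _ _ (by norm_num), norm_mul]
    simp [Complex.conj_ofNat]
  have hp : (q:ℂ) ^ (3/4 - 1/2 : ℂ) ≠ 0 := by simp [qc]
  have hp' : 0 < ‖(q:ℂ) ^ (3/4 - 1/2 : ℂ)‖ := norm_pos_iff.2 hp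
  have hpp : (q:ℂ) ^ (1 - 3/4 - 1/2 : ℂ) = ((q:ℂ) ^ (3/4 - 1/2 : ℂ))⁻¹ := by
    rw [← Complex.cpow_neg]; norm_num
  have r1 : ‖DirichletCharacter.rootNumber χ‖ = ‖DirichletCharacter.rootNumber χ⁻¹‖ := by
    have a1 := congrArg norm e1
    have a3 := congrArg norm e3
    rw [norm_mul, norm_mul] at a1 a3
    rw [n3, a1, n2] at a3
    have := mul_right_cancel₀ n1.ne' a3
    exact mul_left_cancel₀ hp'.ne' this
  have r2 : ‖DirichletCharacter.rootNumber χ‖ * ‖DirichletCharacter.rootNumber χ⁻¹‖ = 1 := by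
    have a1 := congrArg norm e1
    have a2 := congrArg norm e2
    rw [sub_sub_cancel] at a2
    rw [hpp] at a2
    rw [norm_mul, norm_mul] at a1 a2
    rw [a1, norm_inv] at a2
    rw [n2] at a2
    have : ‖DirichletCharacter.completedLFunction χ (3/4)‖ * 1 =
      ‖DirichletCharacter.completedLFunction χ (3/4)‖ * (‖DirichletCharacter.rootNumber χ‖ * ‖DirichletCharacter.rootNumber χ⁻¹‖) := by
      rw [mul_one]
      nth_rw 1 [a2]
      generalize ‖(q:ℂ) ^ (3/4 - 1/2 : ℂ)‖ = z at hp' ⊢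
      field_simp
    exact (mul_left_cancel₀ n1.ne' this).symm
  rw [← r1] at r2
  nlinarith [norm_nonneg (DirichletCharacter.rootNumber χ)]

lemma func_norm {q : ℕ} [NeZero q] (hq : q ≠ 1) (χ : DirichletCharacter ℂ q) (h : χ.IsPrimitive)
    (hR : dirichletRH χ) (s : ℂ) (hs : s.re = 1/2) (x : ℝ) (hx : 0 < x) (hx1 : x ≤ 1/4) :
    ‖DirichletCharacter.LFunction χ (s - x)‖ * ‖DirichletCharacter.gammaFactor χ (s - x)‖ =
    (q:ℝ) ^ x * (‖DirichletCharacter.LFunction χ (s + x)‖ * ‖DirichletCharacter.gammaFactor χ (s + x)‖) := by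
  have hχ := primitive_ne_one hq χ h
  have q0 : (0:ℝ) < q := by exact_mod_cast Nat.pos_of_ne_zero (NeZero.ne q)
  have e := h.completedLFunction_one_sub (star (s + x))
  have st : 1 - star (s + x) = s - x := by
    apply Complex.ext
    · simp [hs]; ring
    · simp
  have hre : (s - x).re = 1/2 - x := by simp [hs]
  have hre2 : (star (s + x)).re = 1/2 + x := by simp [hs]
  rw [st, completed_eq _ _ (by rw [hre]; linarith)] at e
  have e' := congrArg norm e
  rw [norm_mul, norm_mul, norm_mul, norm_root hq χ h hR, mul_one,
    completed_norm_inv χ hχ _ (by rw [hre2]; linarith), star_star] at e'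
  rw [e']
  congr 1
  rw [Complex.norm_natCast_cpow_of_pos (Nat.pos_of_ne_zero (NeZero.ne q))]
  congr 1
  simp [hs]

lemma gammaℝ_ratio : ∃ C : ℝ, 1 ≤ C ∧ ∀ u : ℂ, 1/4 ≤ u.re → ∀ h : ℝ, 0 ≤ h → h ≤ 1 →
    ‖Gammaℝ (u + 2 * h)‖ ≤ (C * ‖u‖) ^ h * ‖Gammaℝ u‖ := by
  obtain ⟨C, hC, H⟩ := gamma_ratio
  refine ⟨C, hC, fun u hu h h0 h1 => ?_⟩
  have := H (u/2) (by simp; linarith) h h0 h1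
  rw [Gammaℝ_def, Gammaℝ_def, norm_mul, norm_mul]
  have e : (u + 2*h)/2 = u/2 + h := by ring
  rw [e]
  have p1 : ‖(π:ℂ) ^ (-(u + 2 * h)/2)‖ ≤ ‖(π:ℂ) ^ (-u/2)‖ := by
    rw [Complex.norm_cpow_eq_rpow_re_of_pos Real.pi_pos, Complex.norm_cpow_eq_rpow_re_of_pos Real.pi_pos]
    apply Real.rpow_le_rpow_of_exponent_le (by linarith [Real.pi_gt_three])
    simp
    linarith
  calc _ ≤ ‖(π:ℂ) ^ (-u/2)‖ * ((C * ‖u/2‖) ^ h * ‖Complex.Gamma (u/2)‖) := by gcongr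
    _ ≤ ‖(π:ℂ) ^ (-u/2)‖ * ((C * ‖u‖) ^ h * ‖Complex.Gamma (u/2)‖) := by
      gcongr
      rw [norm_div]; simp
    _ = _ := by ring

lemma func_ineq : ∃ C : ℝ, 1 ≤ C ∧ ∀ (q : ℕ) [NeZero q], q ≠ 1 → ∀ (χ : DirichletCharacter ℂ q),
    χ.IsPrimitive → dirichletRH χ → ∀ s : ℂ, s.re = 1/2 → ∀ x : ℝ, 0 < x → x ≤ 1/4 →
    ‖DirichletCharacter.LFunction χ (s - x)‖ ≤
      ‖DirichletCharacter.LFunction χ (s + x)‖ * (C * q * ‖s + 2‖) ^ x := by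
  obtain ⟨C, hC, H⟩ := gammaℝ_ratio
  refine ⟨C, hC, fun q _ hq χ h hR s hs x hx hx1 => ?_⟩
  have e := func_norm hq χ h hR s hs x hx hx1
  have hre : (s - x).re = 1/2 - x := by simp [hs]
  have g0 := norm_pos_iff.2 (gammaFactor_ne_zero χ (s - x) (by rw [hre]; linarith))
  have nle : ∀ c : ℝ, -1/2 ≤ c → c ≤ 2 → ‖s + c‖ ≤ ‖s + 2‖ := by
    intro c hc hc2
    rw [← sq_le_sq₀ (norm_nonneg _) (norm_nonneg _), Complex.sq_norm, Complex.sq_norm,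
      Complex.normSq_apply, Complex.normSq_apply]
    simp [hs]; nlinarith
  have g : ‖DirichletCharacter.gammaFactor χ (s + x)‖ ≤ (C * ‖s + 2‖) ^ x * ‖DirichletCharacter.gammaFactor χ (s - x)‖ := by
    simp only [DirichletCharacter.gammaFactor]
    split_ifs
    · have := H (s - x) (by rw [hre]; linarith) x hx.le (by linarith)
      have e : s - x + 2 * x = s + x := by ring
      rw [e] at this
      refine this.trans ?_
      gcongr
      have := nle (-x) (by linarith) (by linarith)
      simpa [sub_eq_add_neg] using this
    · have := H (s - x + 1) (by simp [hs]; linarith) x hx.le (by linarith)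
      have e : s - x + 1 + 2 * x = s + x + 1 := by ring
      rw [e] at this
      refine this.trans ?_
      gcongr
      have := nle (1-x) (by linarith) (by linarith)
      have e : s - x + 1 = s + ((1 - x : ℝ):ℂ) := by push_cast; ring
      rwa [e]
  rw [← mul_le_mul_iff_left₀ g0, e]
  have : (C * q * ‖s+2‖) ^ x = (q:ℝ) ^ x * (C * ‖s+2‖) ^ x := by
    rw [← Real.mul_rpow (by positivity) (by positivity)]; congr 1; ring
  rw [this]
  calc _ ≤ (q:ℝ) ^ x * (‖DirichletCharacter.LFunction χ (s + x)‖ * ((C * ‖s + 2‖) ^ x * ‖DirichletCharacter.gammaFactor χ (s - x)‖)) := by gcongr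
    _ = _ := by ring

end Stmt5

open Complex Real Finset
namespace Stmt5

lemma sum_range_zmod {q : ℕ} [NeZero q] (f : ZMod q → ℂ) :
    ∑ i ∈ Finset.range q, f (i : ZMod q) = ∑ a, f a := by
  refine Finset.sum_bij' (fun i _ => (i : ZMod q)) (fun a _ => a.val) ?_ ?_ ?_ ?_ ?_
  · simp
  · intro a _; simpa using ZMod.val_lt a
  · intro i hi; exact ZMod.val_cast_of_lt (by simpa using hi)
  · intro a _; simp
  · simp

lemma partial_sum_bound {q : ℕ} [NeZero q] (χ : DirichletCharacter ℂ q) (hχ : χ ≠ 1) (n : ℕ) :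
    ‖∑ k ∈ Finset.Icc 1 n, χ (k : ZMod q)‖ ≤ q + 1 := by
  have per : Function.Periodic (fun n : ℕ => ∑ k ∈ Finset.range n, χ (k : ZMod q)) q := by
    intro n
    simp only
    rw [Finset.sum_range_add]
    have : ∑ x ∈ Finset.range q, χ ((n + x : ℕ) : ZMod q) = 0 := by
      have := sum_range_zmod (q := q) (fun a => χ ((n : ZMod q) + a))
      simp only [Nat.cast_add]
      rw [this, ← MulChar.sum_eq_zero_of_ne_one hχ]
      exact Fintype.sum_equiv (Equiv.addLeft (n : ZMod q)) _ _ (fun a => rfl)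
    rw [this, add_zero]
  have b : ∀ n : ℕ, ‖∑ k ∈ Finset.range n, χ (k : ZMod q)‖ ≤ q := by
    intro n
    have h1 := per.map_mod_nat n
    rw [← h1]
    calc _ ≤ ∑ k ∈ Finset.range (n % q), ‖χ (k : ZMod q)‖ := norm_sum_le _ _
      _ ≤ ∑ k ∈ Finset.range (n % q), (1:ℝ) := Finset.sum_le_sum fun k _ => χ.norm_le_one _
      _ = ((n % q : ℕ):ℝ) := by simp
      _ ≤ q := by exact_mod_cast (Nat.mod_lt _ (Nat.pos_of_ne_zero (NeZero.ne q))).le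
  have e : ∑ k ∈ Finset.Icc 1 n, χ (k : ZMod q) =
      ∑ k ∈ Finset.range (n+1), χ (k : ZMod q) - χ 0 := by
    rw [Finset.range_eq_Ico, Finset.sum_eq_sum_Ico_succ_bot (by omega)]
    simp
    rfl
  rw [e]
  refine (norm_sub_le _ _).trans ?_
  exact add_le_add (b _) (χ.norm_le_one _)

lemma L_growth {q : ℕ} [NeZero q] (χ : DirichletCharacter ℂ q) (hχ : χ ≠ 1) :
    ∃ K : ℝ, 1 ≤ K ∧ ∀ s : ℂ, 1/4 ≤ s.re → ‖DirichletCharacter.LFunction χ s‖ ≤ K * ‖s‖ := by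
  set S : ℝ → ℂ := fun t => ∑ k ∈ Finset.Icc 1 ⌊t⌋₊, χ (k : ZMod q) with hS
  have Sb : ∀ t, ‖S t‖ ≤ q + 1 := fun t => partial_sum_bound χ hχ _
  have S0 : ∀ t, t < 1 → S t = 0 := by
    intro t ht
    simp [hS, Nat.floor_eq_zero.2 ht]
  have Sm : Measurable S := by
    have : Measurable (fun n : ℕ => ∑ k ∈ Finset.Icc 1 n, χ (k : ZMod q)) := by fun_prop
    exact this.comp Nat.measurable_floor
  have Sloc : MeasureTheory.LocallyIntegrableOn S (Set.Ioi 0) := by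
    apply MeasureTheory.LocallyIntegrable.locallyIntegrableOn
    refine (MeasureTheory.locallyIntegrable_const ((q:ℝ) + 1)).mono Sm.aestronglyMeasurable ?_
    filter_upwards with t
    refine (Sb t).trans (le_abs_self _)
  have dm : ∀ s : ℂ, 0 < s.re → DifferentiableAt ℂ (mellin S) (-s) := by
    intro s hs
    refine mellin_differentiableAt_of_isBigO_rpow (a := 0) (b := -s.re - 1) Sloc ?_ (by simpa) ?_ (by simp)
    · simp only [neg_zero, Real.rpow_zero]
      exact Asymptotics.IsBigO.of_bound (q+1) (Filter.Eventually.of_forall fun t => by simpa using Sb t)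
    · apply Asymptotics.IsBigO.of_bound 1
      filter_upwards [mem_nhdsWithin_of_mem_nhds (Iio_mem_nhds (show (0:ℝ) < 1 by norm_num))] with t ht
      rw [S0 t ht]; simp
  have eqm : ∀ s : ℂ, mellin S (-s) = ∫ t in Set.Ioi (1:ℝ), S t * (t:ℂ) ^ (-(s+1)) := by
    intro s
    rw [mellin, ← MeasureTheory.integral_indicator measurableSet_Ioi,
      ← MeasureTheory.integral_indicator measurableSet_Ioi]
    apply MeasureTheory.integral_congr_ae
    have : ∀ᵐ t : ℝ, t ≠ 1 := by simp [MeasureTheory.ae_iff]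
    filter_upwards [this] with t ht
    by_cases h1 : 1 < t
    · rw [Set.indicator_of_mem (show t ∈ Set.Ioi (0:ℝ) by simp; linarith), Set.indicator_of_mem (show t ∈ Set.Ioi (1:ℝ) from h1)]
      rw [smul_eq_mul, mul_comm]
      congr 2; ring
    · have : t < 1 := lt_of_le_of_ne (not_lt.1 h1) ht
      rw [Set.indicator_of_notMem (show t ∉ Set.Ioi (1:ℝ) from h1)]
      simp only [Set.indicator]
      split_ifs <;> simp [S0 t this]
  have key : ∀ s : ℂ, 0 < s.re → DirichletCharacter.LFunction χ s = s * mellin S (-s) := by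
    have a1 : AnalyticOnNhd ℂ (DirichletCharacter.LFunction χ) {z | 0 < z.re} := fun z _ =>
      (DirichletCharacter.differentiable_LFunction hχ).analyticAt z
    have op : IsOpen {z : ℂ | 0 < z.re} := isOpen_lt continuous_const Complex.continuous_re
    have a2 : AnalyticOnNhd ℂ (fun s => s * mellin S (-s)) {z : ℂ | 0 < z.re} := by
      apply DifferentiableOn.analyticOnNhd _ op
      intro z hz
      apply DifferentiableAt.differentiableWithinAt
      refine differentiableAt_id.mul ?_
      exact DifferentiableAt.comp (f := fun z : ℂ => -z) (g := mellin S) z (dm z hz) differentiableAt_id.neg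
    have pc : IsPreconnected {z : ℂ | 0 < z.re} := (convex_halfSpace_re_gt 0).isPreconnected
    have := a1.eqOn_of_preconnected_of_eventuallyEq a2 pc (z₀ := 2) (by simp) (by
      have : {z : ℂ | 1 < z.re} ∈ nhds (2:ℂ) :=
        (isOpen_lt continuous_const Complex.continuous_re).mem_nhds (by simp)
      filter_upwards [this] with z hz
      have hz : 1 < z.re := hz
      rw [DirichletCharacter.LFunction_eq_LSeries _ hz]
      rw [LSeries_eq_mul_integral _ (le_refl (0:ℝ)) (by linarith)
        (DirichletCharacter.LSeriesSummable_of_one_lt_re χ hz), eqm]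
      simp only [Real.rpow_zero]
      exact Asymptotics.IsBigO.of_bound (q+1) (Filter.Eventually.of_forall fun t => by
        simpa using partial_sum_bound χ hχ t))
    intro s hs
    exact this hs
  refine ⟨4 * (q+1), by linarith [Nat.cast_nonneg (α := ℝ) q], fun s hs => ?_⟩
  rw [key s (by linarith), norm_mul, mul_comm]
  gcongr
  rw [eqm]
  have ib : MeasureTheory.IntegrableOn (fun t : ℝ => ((q:ℝ)+1) * t ^ (-(5/4):ℝ)) (Set.Ioi 1) :=
    (integrableOn_Ioi_rpow_of_lt (by norm_num) (by norm_num)).const_mul _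
  refine (MeasureTheory.norm_integral_le_of_norm_le ib ?_).trans ?_
  · filter_upwards [MeasureTheory.self_mem_ae_restrict measurableSet_Ioi] with t ht
    have ht : (1:ℝ) < t := ht
    rw [norm_mul, Complex.norm_cpow_eq_rpow_re_of_pos (by linarith)]
    gcongr
    · exact Sb t
    · exact ht.le
    · simp; linarith
  · rw [MeasureTheory.integral_const_mul, integral_Ioi_rpow_of_lt (by norm_num) (by norm_num)]
    norm_num
    linarith

end Stmt5

open Complex Real Finset
namespace Stmt5

lemma exists_log_ball (f : ℂ → ℂ) (c : ℂ) (R : ℝ) (hR : 0 < R)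
    (hf : DifferentiableOn ℂ f (Metric.ball c R)) (h0 : ∀ z ∈ Metric.ball c R, f z ≠ 0) :
    ∃ g : ℂ → ℂ, g c = Complex.log (f c) ∧
      (∀ z ∈ Metric.ball c R, HasDerivAt g (deriv f z / f z) z) ∧
      ∀ z ∈ Metric.ball c R, Complex.exp (g z) = f z := by
  have hd : DifferentiableOn ℂ (fun z => deriv f z / f z) (Metric.ball c R) :=
    (hf.deriv Metric.isOpen_ball).div hf h0
  obtain ⟨g, hg, hg'⟩ := hd.isExactOn_ball.with_val_at c (Complex.log (f c))
  refine ⟨g, hg, hg', ?_⟩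
  have hcb : c ∈ Metric.ball c R := Metric.mem_ball_self hR
  -- f * exp(-g) constant
  have hk : ∀ z ∈ Metric.ball c R, HasDerivAt (fun z => f z * Complex.exp (- g z)) 0 z := by
    intro z hz
    have hfz : HasDerivAt f (deriv f z) z :=
      ((hf z hz).differentiableAt (Metric.isOpen_ball.mem_nhds hz)).hasDerivAt
    have := hfz.mul (hg' z hz).neg.cexp
    have h := h0 z hz
    have e : deriv f z * Complex.exp ((-g) z) + f z * (Complex.exp ((-g) z) * -(deriv f z / f z)) = 0 := by
      field_simp; ring
    rw [e] at this
    exact this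
  intro z hz
  have hc := (convex_ball c R).is_const_of_fderivWithin_eq_zero (𝕜 := ℂ) (f := fun z => f z * Complex.exp (- g z))
    (fun w hw => (hk w hw).differentiableAt.differentiableWithinAt)
    (fun w hw => by
      rw [fderivWithin_of_isOpen Metric.isOpen_ball hw]
      have := (hk w hw).hasFDerivAt.fderiv
      rw [this]; ext; simp) hz hcb
  simp only [hg, Complex.exp_neg, Complex.exp_log (h0 c hcb)] at hc
  rw [mul_inv_cancel₀ (h0 c hcb)] at hc
  have := Complex.exp_ne_zero (g z)
  field_simp at hc
  exact hc.symm

lemma bc_ball (R δ : ℝ) (hδ : 0 < δ) (hδR : δ < R) : ∃ C : ℝ, 1 ≤ C ∧ ∀ (g : ℂ → ℂ) (c : ℂ) (M : ℝ),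
    1 ≤ M → DifferentiableOn ℂ g (Metric.ball c R) → (∀ z ∈ Metric.ball c R, (g z).re ≤ M) →
    ‖g c‖ ≤ 6 * M → ∀ s : ℂ, ‖s - c‖ ≤ R - δ → ‖g s‖ ≤ C * M ∧ ‖deriv g s‖ ≤ C * M := by
  have hR : 0 < R := by linarith
  set D : ℝ := (2 * R + 6 * (2 * R)) / (δ/2) with hD
  have hD1 : 1 ≤ D := by rw [hD, le_div_iff₀ (by positivity)]; linarith
  have hD2 : D ≤ D * (1 + 2/δ) := by
    have : 0 < 2/δ := by positivity
    nlinarith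
  refine ⟨D * (1 + 2/δ), hD1.trans hD2, fun g c M hM hg hre hgc s hs => ?_⟩
  have main : ∀ z : ℂ, ‖z - c‖ ≤ R - δ/2 → ‖g z‖ ≤ D * M := by
    intro z hz
    have h1 : DifferentiableOn ℂ (fun w => g (w + c)) (Metric.ball 0 R) := by
      refine hg.comp (by fun_prop) ?_
      intro w hw
      simpa using hw
    have := Complex.borelCaratheodory (f := fun w => g (w + c)) (M := M) (R := R) (z := z - c)
      (by linarith) h1 (by
        intro w hw
        exact hre _ (by simpa using hw)) hR (by simp; linarith)
    simp only [sub_add_cancel, zero_add] at this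
    refine this.trans ?_
    rw [← add_div, hD, div_mul_eq_mul_div]
    have hn := norm_nonneg (z - c)
    apply div_le_div₀
    · positivity
    · have a1 : 2 * M * ‖z - c‖ ≤ 2 * M * R := by gcongr; linarith
      have a2 : ‖g c‖ * (R + ‖z - c‖) ≤ (6 * M) * (R + R) := by gcongr; linarith
      nlinarith
    · linarith
    · linarith
  constructor
  · refine (main s (by linarith)).trans ?_
    gcongr
  · have hsub : Metric.closedBall s (δ/2) ⊆ Metric.ball c R := by
      intro w hw
      simp [dist_eq_norm] at hw ⊢
      calc ‖w - c‖ ≤ ‖w - s‖ + ‖s - c‖ := norm_sub_le_norm_sub_add_norm_sub _ _ _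
        _ < R := by linarith
    have := Complex.norm_deriv_le_of_forall_mem_sphere_norm_le (c := s) (R := δ/2) (C := D * M) (f := g)
      (by positivity) (DifferentiableOn.diffContOnCl_ball hg hsub) (by
        intro w hw
        apply main
        have hw : ‖w - s‖ = δ/2 := by simpa [dist_eq_norm] using hw
        calc ‖w - c‖ ≤ ‖w - s‖ + ‖s - c‖ := norm_sub_le_norm_sub_add_norm_sub _ _ _
        _ ≤ _ := by linarith)
    refine this.trans ?_
    have e : D * (1 + 2/δ) * M = D * M + D * M / (δ/2) := by field_simp
    rw [e]
    have : 0 ≤ D * M := by positivity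
    linarith

lemma norm_L_le_ge {q : ℕ} [NeZero q] (χ : DirichletCharacter ℂ q) (s : ℂ) (hs : 3 ≤ s.re) :
    1/4 ≤ ‖DirichletCharacter.LFunction χ s‖ ∧ ‖DirichletCharacter.LFunction χ s‖ ≤ 4 := by
  rw [DirichletCharacter.LFunction_eq_LSeries _ (by linarith)]
  have hsum := DirichletCharacter.LSeriesSummable_of_one_lt_re χ (show 1 < s.re by linarith)
  have hz : HasSum (fun n : ℕ => 1 / ((n:ℝ)) ^ 2) (π ^ 2 / 6) := hasSum_zeta_two
  have e1 : LSeries (fun n => χ (n : ZMod q)) s - 1 = ∑' n : ℕ, (LSeries.term (fun n => χ (n : ZMod q)) s n - if n = 1 then 1 else 0) := by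
    rw [Summable.tsum_sub hsum (summable_of_hasFiniteSupport (by
      apply Set.Finite.subset (Set.finite_singleton 1)
      intro n hn
      simp at hn
      simp [hn]))]
    rw [tsum_ite_eq]; rfl
  have hz2 : HasSum (fun n : ℕ => 1 / ((n:ℝ)) ^ 2 - if n = 1 then 1 else 0) (π ^ 2 / 6 - 1) :=
    hz.sub (hasSum_ite_eq 1 1)
  have b : ‖LSeries (fun n => χ (n : ZMod q)) s - 1‖ ≤ π ^ 2 / 6 - 1 := by
    rw [e1]
    refine tsum_of_norm_bounded hz2 ?_
    intro n
    rcases eq_or_ne n 0 with rfl | hn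
    · simp
    rcases eq_or_ne n 1 with rfl | hn1
    · simp [LSeries.term_of_ne_zero]
    · rw [if_neg hn1, if_neg hn1, sub_zero, sub_zero, LSeries.term_of_ne_zero hn, norm_div,
        Complex.norm_natCast_cpow_of_pos (Nat.pos_of_ne_zero hn)]
      have h1 : (1:ℝ) ≤ n := by exact_mod_cast Nat.pos_of_ne_zero hn
      apply div_le_div₀ zero_le_one (χ.norm_le_one _) (by positivity)
      rw [← Real.rpow_natCast]
      exact Real.rpow_le_rpow_of_exponent_le h1 (by push_cast; linarith)
  have hpi : π ^ 2 / 6 - 1 ≤ 3/4 := by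
    have := Real.pi_lt_d2
    have := Real.pi_pos
    nlinarith
  constructor
  · have := norm_sub_norm_le (1:ℂ) (LSeries (fun n => χ (n : ZMod q)) s)
    rw [norm_one, norm_sub_rev] at this
    linarith
  · have := norm_sub_norm_le (LSeries (fun n => χ (n : ZMod q)) s) 1
    rw [norm_one] at this
    linarith

lemma norm_log_le (z : ℂ) (h1 : 1/4 ≤ ‖z‖) (h2 : ‖z‖ ≤ 4) : ‖Complex.log z‖ ≤ 6 := by
  have hre : |(Complex.log z).re| ≤ 2 := by
    rw [Complex.log_re, abs_le]
    have hz : 0 < ‖z‖ := by linarith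
    have l4 : Real.log 4 ≤ 2 := by
      rw [Real.log_le_iff_le_exp (by norm_num)]
      have := Real.add_one_le_exp (1:ℝ)
      have e : Real.exp 2 = Real.exp 1 * Real.exp 1 := by rw [← Real.exp_add]; norm_num
      nlinarith
    constructor
    · have := Real.log_le_log (by norm_num) h1
      rw [one_div, Real.log_inv] at this
      linarith
    · have := Real.log_le_log hz h2
      linarith
  have him : |(Complex.log z).im| ≤ 4 := by
    rw [Complex.log_im]
    exact (Complex.abs_arg_le_pi z).trans (by linarith [Real.pi_lt_d2])
  exact (Complex.norm_le_abs_re_add_abs_im _).trans (by linarith)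

/-- L is e^{o(s)}-controlled on Re ≥ 1/2 + ε -/
lemma L_lower {q : ℕ} [NeZero q] (χ : DirichletCharacter ℂ q) (hχ : χ ≠ 1)
    (hR : dirichletRH χ) (ε : ℝ) (hε : 0 < ε) (hε1 : ε ≤ 1) : ∃ K : ℝ, 1 ≤ K ∧ ∀ s : ℂ, 1/2 + ε ≤ s.re →
      ‖DirichletCharacter.LFunction χ s‖⁻¹ ≤ Real.exp (K * (‖s‖ + 1) ^ (1/2:ℝ)) ∧
      ‖deriv (DirichletCharacter.LFunction χ) s / DirichletCharacter.LFunction χ s‖ ≤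
        K * (‖s‖ + 1) ^ (1/2:ℝ) := by
  obtain ⟨K, hK, hg⟩ := L_growth χ hχ
  obtain ⟨C, hC, H⟩ := bc_ball (5/2 - ε/2) (ε/2) (by positivity) (by linarith)
  refine ⟨C * (2 * (K * 7) ^ (1/2:ℝ)), ?_, fun s hs => ?_⟩
  · have : 1 ≤ (K * 7) ^ (1/2:ℝ) := Real.one_le_rpow (by linarith) (by norm_num)
    nlinarith
  set c : ℂ := ((max s.re 3 : ℝ) : ℂ) + s.im * I with hc
  have cre : c.re = max s.re 3 := by simp [hc]
  have cim : c.im = s.im := by simp [hc]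
  have hsc : ‖s - c‖ ≤ 5/2 - ε/2 - ε/2 := by
    have : s - c = ((s.re - max s.re 3 : ℝ) : ℂ) := by
      apply Complex.ext <;> simp [cre, cim]
    rw [this, Complex.norm_real, Real.norm_eq_abs, abs_le]
    rcases max_cases s.re 3 with h | h <;> constructor <;> linarith
  set f := DirichletCharacter.LFunction χ with hf
  have df : Differentiable ℂ f := DirichletCharacter.differentiable_LFunction hχ
  have hb : ∀ z ∈ Metric.ball c (5/2 - ε/2), 1/2 < z.re ∧ ‖z‖ ≤ ‖s‖ + 5 := by
    intro z hz
    have hz : ‖z - c‖ < 5/2 - ε/2 := by simpa [dist_eq_norm] using hz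
    constructor
    · have := (abs_le.1 (Complex.abs_re_le_norm (z - c))).1
      simp only [Complex.sub_re, cre] at this
      have := le_max_right s.re 3
      linarith
    · calc ‖z‖ = ‖(z - c) - (s - c) + s‖ := by congr 1; ring
        _ ≤ ‖z - c‖ + ‖s - c‖ + ‖s‖ := (norm_add_le _ _).trans (by gcongr; exact norm_sub_le _ _)
        _ ≤ _ := by linarith
  obtain ⟨g, gc, gd, ge⟩ := exists_log_ball f c (5/2 - ε/2) (by linarith) df.differentiableOn
    (fun z hz => L_ne_zero_right χ hχ hR z (hb z hz).1)
  set M : ℝ := 2 * (K * 7) ^ (1/2:ℝ) * (‖s‖+1) ^ (1/2:ℝ) with hM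
  have hM1 : 1 ≤ M := by
    have a1 : 1 ≤ (K * 7) ^ (1/2:ℝ) := Real.one_le_rpow (by linarith) (by norm_num)
    have a2 : 1 ≤ (‖s‖+1) ^ (1/2:ℝ) := Real.one_le_rpow (by linarith [norm_nonneg s]) (by norm_num)
    rw [hM]; nlinarith
  have hre : ∀ z ∈ Metric.ball c (5/2 - ε/2), (g z).re ≤ M := by
    intro z hz
    have h1 := hg z (by linarith [(hb z hz).1])
    rw [← ge z hz, Complex.norm_exp] at h1
    have h2 : Real.exp (g z).re ≤ K * 7 * (‖s‖ + 1) := h1.trans (by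
      have := (hb z hz).2
      have := norm_nonneg s
      nlinarith)
    have h3 := Real.log_le_log (Real.exp_pos _) h2
    rw [Real.log_exp] at h3
    refine h3.trans ?_
    have := Real.log_le_rpow_div (x := K * 7 * (‖s‖+1)) (ε := 1/2) (by positivity) (by norm_num)
    rw [Real.mul_rpow (by positivity) (by positivity)] at this
    rw [hM]
    linarith
  have hcv := norm_L_le_ge χ c (by rw [cre]; exact le_max_right _ _)
  have hcn : ‖g c‖ ≤ 6 * M := by
    rw [gc]
    exact (norm_log_le _ hcv.1 hcv.2).trans (by linarith)
  obtain ⟨b1, b2⟩ := H g c M hM1 (fun z hz => (gd z hz).differentiableAt.differentiableWithinAt) hre hcn s hsc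
  have hsb : s ∈ Metric.ball c (5/2 - ε/2) := by
    simp [dist_eq_norm]; linarith
  have eM : C * (2 * (K * 7) ^ (1/2:ℝ)) * (‖s‖+1) ^ (1/2:ℝ) = C * M := by rw [hM]; ring
  rw [eM]
  constructor
  · rw [← ge s hsb, Complex.norm_exp, ← Real.exp_neg]
    apply Real.exp_le_exp.2
    have := (abs_le.1 (Complex.abs_re_le_norm (g s))).1
    linarith
  · rw [← (gd s hsb).deriv]
    exact b2

end Stmt5

open Complex Real Finset
namespace Stmt5

lemma pl_ineq {q : ℕ} [NeZero q] (χ : DirichletCharacter ℂ q) (hχ : χ ≠ 1)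
    (hR : dirichletRH χ) (Q : ℝ) (hQ : 1 ≤ Q) (h : ℝ) (h0 : 0 < h) (h1 : h ≤ 1/4)
    (hline : ∀ s : ℂ, s.re = 1/2 → ‖DirichletCharacter.LFunction χ (s - h)‖ ≤
      ‖DirichletCharacter.LFunction χ (s + h)‖ * (Q * ‖s + 2‖) ^ h) (s : ℂ) (hs : 1/2 ≤ s.re) :
    ‖DirichletCharacter.LFunction χ (s - h)‖ ≤
      ‖DirichletCharacter.LFunction χ (s + h)‖ * (Q * ‖s + 2‖) ^ h := by
  set L := DirichletCharacter.LFunction χ with hL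
  have dL : Differentiable ℂ L := DirichletCharacter.differentiable_LFunction hχ
  obtain ⟨K, hK, hg⟩ := L_growth χ hχ
  obtain ⟨K', hK', hl⟩ := L_lower χ hχ hR h h0 (by linarith)
  set f : ℂ → ℂ := fun z => L (z + 1/2 - h) / L (z + 1/2 + h) * ((Q:ℂ) * (z + 5/2)) ^ ((-h : ℝ):ℂ) with hf
  have ne : ∀ z : ℂ, 0 ≤ z.re → L (z + 1/2 + h) ≠ 0 := by
    intro z hz
    exact L_ne_zero_right χ hχ hR _ (by simp; linarith)
  have n5 : ∀ z : ℂ, 0 ≤ z.re → 1 ≤ ‖z + 5/2‖ := by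
    intro z hz
    refine le_trans ?_ (Complex.re_le_norm _)
    simp; linarith
  have npow : ∀ z : ℂ, 0 ≤ z.re → ‖((Q:ℂ) * (z + 5/2)) ^ ((-h : ℝ):ℂ)‖ = ((Q * ‖z + 5/2‖) ^ h)⁻¹ := by
    intro z hz
    rw [Complex.norm_cpow_real, norm_mul, Complex.norm_real, Real.norm_of_nonneg (by linarith),
      Real.rpow_neg (by positivity)]
  have npow1 : ∀ z : ℂ, 0 ≤ z.re → ‖((Q:ℂ) * (z + 5/2)) ^ ((-h : ℝ):ℂ)‖ ≤ 1 := by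
    intro z hz
    rw [npow z hz]
    apply inv_le_one_of_one_le₀
    apply Real.one_le_rpow _ h0.le
    have := n5 z hz
    nlinarith
  have key : ∀ z : ℂ, 0 ≤ z.re → ‖f z‖ ≤ 1 := by
    intro z hz
    refine PhragmenLindelof.right_half_plane_of_bounded_on_real (C := 1) (f := f) ?_ ?_ ?_ ?_ hz
    · apply DifferentiableOn.diffContOnCl
      rw [Complex.closure_setOfPred_lt_re]
      intro w hw
      have hw : 0 ≤ w.re := hw
      apply DifferentiableAt.differentiableWithinAt
      refine DifferentiableAt.mul (DifferentiableAt.div ?_ ?_ (ne w hw)) ?_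
      · exact (dL _).comp w (by fun_prop)
      · exact (dL _).comp w (by fun_prop)
      · refine DifferentiableAt.cpow (by fun_prop) (by fun_prop) ?_
        left
        simp
        apply mul_pos <;> linarith
    · refine ⟨1, by norm_num, K + K', ?_⟩
      apply Asymptotics.IsBigO.of_bound (Real.exp (K + 2 * K'))
      have : ∀ᶠ z in Bornology.cobounded ℂ ⊓ Filter.principal {z : ℂ | 0 < z.re}, 0 < z.re :=
        Filter.eventually_inf_principal.2 (Filter.Eventually.of_forall fun z hz => hz)
      filter_upwards [this] with w hw
      rw [Real.norm_of_nonneg (Real.exp_pos _).le, ← Real.exp_add, Real.rpow_one]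
      have b1 : ‖L (w + 1/2 - h)‖ ≤ Real.exp (K * (‖w‖ + 1)) := by
        refine (hg _ (by simp; linarith)).trans ?_
        have : ‖w + 1/2 - h‖ ≤ ‖w‖ + 1 := by
          have : w + 1/2 - h = w + ((1/2 - h : ℝ) : ℂ) := by push_cast; ring
          rw [this]
          refine (norm_add_le _ _).trans ?_
          rw [Complex.norm_real, Real.norm_of_nonneg (by linarith)]
          linarith
        have a : K * ‖w + 1/2 - h‖ ≤ K * (‖w‖ + 1) := by gcongr
        linarith [Real.add_one_le_exp (K * (‖w‖ + 1))]
      have b2 : ‖L (w + 1/2 + h)‖⁻¹ ≤ Real.exp (K' * (‖w‖ + 2)) := by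
        refine (hl _ (by simp; linarith)).1.trans ?_
        apply Real.exp_le_exp.2
        gcongr
        have : ‖w + 1/2 + h‖ ≤ ‖w‖ + 1 := by
          have : w + 1/2 + h = w + ((1/2 + h : ℝ) : ℂ) := by push_cast; ring
          rw [this]
          refine (norm_add_le _ _).trans ?_
          rw [Complex.norm_real, Real.norm_of_nonneg (by linarith)]
          linarith
        calc (‖w + 1/2 + h‖ + 1) ^ (1/2:ℝ) ≤ (‖w + 1/2 + h‖ + 1) ^ (1:ℝ) := by
              apply Real.rpow_le_rpow_of_exponent_le _ (by norm_num)
              linarith [norm_nonneg (w + 1/2 + h)]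
          _ ≤ ‖w‖ + 2 := by rw [Real.rpow_one]; linarith
      rw [hf]
      simp only
      rw [norm_mul, norm_div, div_eq_mul_inv]
      calc _ ≤ Real.exp (K * (‖w‖ + 1)) * Real.exp (K' * (‖w‖ + 2)) * 1 := by
            gcongr
            exact npow1 w hw.le
        _ = _ := by rw [mul_one, ← Real.exp_add]; congr 1; ring
    · refine Filter.isBoundedUnder_of_eventually_le (a := 16) ?_
      filter_upwards [Filter.eventually_ge_atTop 3] with x hx
      have a1 := (norm_L_le_ge χ ((x:ℂ) + 1/2 - h) (by simp; linarith)).2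
      have a2 := (norm_L_le_ge χ ((x:ℂ) + 1/2 + h) (by simp; linarith)).1
      have a3 := npow1 (x:ℂ) (by simp; linarith)
      rw [hf]
      simp only
      rw [norm_mul, norm_div]
      have : ‖L ((x:ℂ) + 1/2 - h)‖ / ‖L ((x:ℂ) + 1/2 + h)‖ ≤ 16 := by
        rw [div_le_iff₀ (by linarith)]; linarith
      calc _ ≤ (16:ℝ) * 1 := by gcongr
        _ = 16 := by norm_num
    · intro x
      have hx0 : 0 ≤ ((x:ℂ) * I).re := by simp
      have := hline (x * I + 1/2) (by simp)
      have e : (x:ℂ) * I + 1/2 + 2 = x * I + 5/2 := by ring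
      rw [e] at this
      rw [hf]
      simp only
      rw [norm_mul, norm_div, npow _ hx0, ← div_eq_mul_inv, div_div, div_le_one₀]
      · exact this
      · have := norm_pos_iff.2 (ne _ hx0)
        have := n5 _ hx0
        positivity
  have k := key (s - 1/2) (by simp; linarith)
  have hx0 : 0 ≤ (s - 1/2).re := by simp; linarith
  rw [hf] at k
  simp only at k
  have p1 := norm_pos_iff.2 (ne _ hx0)
  have p2 := n5 _ hx0
  rw [norm_mul, norm_div, npow _ hx0, ← div_eq_mul_inv, div_div, div_le_one₀ (by positivity)] at k
  have e1 : s - 1/2 + 1/2 = s := by ring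
  have e2 : s - 1/2 + 5/2 = s + 2 := by ring
  rwa [e1, e2] at k

lemma deriv_ineq {q : ℕ} [NeZero q] (χ : DirichletCharacter ℂ q) (hχ : χ ≠ 1)
    (hR : dirichletRH χ) (Q : ℝ) (hQ : 1 ≤ Q) (s : ℂ) (hs : 1/2 < s.re)
    (hh : ∀ h : ℝ, 0 < h → h ≤ 1/4 →  ‖DirichletCharacter.LFunction χ (s - h)‖ ≤
      ‖DirichletCharacter.LFunction χ (s + h)‖ * (Q * ‖s + 2‖) ^ h)  :
    -(deriv (DirichletCharacter.LFunction χ) s / DirichletCharacter.LFunction χ s).re ≤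
      1/2 * Real.log (Q * ‖s + 2‖) := by
  set L := DirichletCharacter.LFunction χ with hL
  have dL : Differentiable ℂ L := DirichletCharacter.differentiable_LFunction hχ
  set r := min (s.re - 1/2) (1/4) with hr
  have r0 : 0 < r := lt_min (by linarith) (by norm_num)
  have hball : ∀ z ∈ Metric.ball s r, L z ≠ 0 := by
    intro z hz
    apply L_ne_zero_right χ hχ hR
    have hz : ‖z - s‖ < r := by simpa [dist_eq_norm] using hz
    have := (abs_le.1 (Complex.abs_re_le_norm (z - s))).1
    simp only [Complex.sub_re] at this
    have := min_le_left (s.re - 1/2) (1/4)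
    linarith
  obtain ⟨g, gc, gd, ge⟩ := exists_log_ball L s r r0 dL.differentiableOn hball
  have hsb : s ∈ Metric.ball s r := Metric.mem_ball_self r0
  have Qs : 0 < Q * ‖s + 2‖ := by
    have : 0 < ‖s + 2‖ := by
      rw [norm_pos_iff]; intro h0
      have := congrArg Complex.re h0
      simp at this; linarith
    positivity
  set D := deriv L s / L s with hD
  have d1 : ∀ c : ℝ, HasDerivAt (fun h : ℝ => (g (s + ((c * h : ℝ):ℂ))).re) (c * D.re) 0 := by
    intro c
    have a1 : HasDerivAt g D (s + ((c * (0:ℝ) : ℝ):ℂ)) := by simpa using gd s hsb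
    have a2 : HasDerivAt (fun h : ℝ => s + ((c * h : ℝ):ℂ)) (c:ℂ) 0 := by
      have := ((hasDerivAt_id (0:ℝ)).const_mul c).ofReal_comp.const_add s
      simpa using this
    have a3 := HasDerivAt.comp (0:ℝ) a1 a2
    have a4 := (Complex.reCLM.hasFDerivAt.comp_hasDerivAt (0:ℝ) a3)
    have e : Complex.reCLM (D * c) = c * D.re := by simp [mul_comm]
    rw [e] at a4
    exact a4
  have d2 : HasDerivAt (fun h : ℝ => (g (s + ((1 * h : ℝ):ℂ))).re - (g (s + (((-1) * h : ℝ):ℂ))).re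
      + h * Real.log (Q * ‖s + 2‖)) (1 * D.re - (-1) * D.re + 1 * Real.log (Q * ‖s+2‖)) 0 :=
    ((d1 1).sub (d1 (-1))).add ((hasDerivAt_id (0:ℝ)).mul_const _)
  have lim := d2.tendsto_slope_zero_right
  have : 0 ≤ (1 * D.re - (-1) * D.re + 1 * Real.log (Q * ‖s+2‖)) := by
    refine ge_of_tendsto lim ?_
    filter_upwards [self_mem_nhdsWithin, mem_nhdsWithin_of_mem_nhds (Iio_mem_nhds r0)] with h hp hlt
    have hp : 0 < h := hp
    have hlt : h < r := hlt
    simp only [smul_eq_mul, zero_add, mul_zero, Complex.ofReal_zero, add_zero, zero_mul, sub_self, sub_zero]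
    apply mul_nonneg (by positivity)
    have h14 : h ≤ 1/4 := hlt.le.trans (min_le_right _ _)
    have := hh h hp h14
    have m1 : s + h ∈ Metric.ball s r := by simp [abs_of_pos hp, hlt]
    have m2 : s - h ∈ Metric.ball s r := by simp [abs_of_pos hp, hlt]
    rw [← ge _ m1, ← ge _ m2, Complex.norm_exp, Complex.norm_exp] at this
    have := Real.log_le_log (Real.exp_pos _) this
    rw [Real.log_exp, Real.log_mul (Real.exp_pos _).ne' (by positivity), Real.log_exp,
      Real.log_rpow Qs] at this
    have e1 : s + ((1 * h : ℝ):ℂ) = s + h := by simp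
    have e2 : s + ((-1 * h : ℝ):ℂ) = s - h := by push_cast; ring
    rw [e1, e2]
    linarith
  linarith

lemma logDeriv_bound : ∃ C : ℝ, 1 ≤ C ∧ ∀ (q : ℕ) [NeZero q], q ≠ 1 → ∀ (χ : DirichletCharacter ℂ q),
    χ.IsPrimitive → dirichletRH χ → ∀ s : ℂ, 1/2 < s.re →
    -(deriv (DirichletCharacter.LFunction χ) s / DirichletCharacter.LFunction χ s).re ≤
      1/2 * Real.log (C * q * ‖s + 2‖) := by
  obtain ⟨C, hC, H⟩ := func_ineq
  refine ⟨C, hC, fun q _ hq χ h hR s hs => ?_⟩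
  have hχ := primitive_ne_one hq χ h
  have q1 : (1:ℝ) ≤ q := by exact_mod_cast Nat.pos_of_ne_zero (NeZero.ne q)
  have hQ : 1 ≤ C * q := by nlinarith
  exact deriv_ineq χ hχ hR _ hQ s hs fun x hx hx1 =>
    pl_ineq χ hχ hR _ hQ x hx hx1 (fun s hs => H q hq χ h hR s hs x hx hx1) s hs.le

end Stmt5

open Complex Real Finset
namespace Stmt5

noncomputable def fej (w : ℝ) : ℝ := ∫ v in (0:ℝ)..1, 2 * (1 - v) * Real.cos (2 * π * v * w)

noncomputable def tri (x : ℝ) : ℝ := max 0 (1 - |x|)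

lemma fej_continuous : Continuous fej := by
  apply intervalIntegral.continuous_parametric_intervalIntegral_of_continuous'
  unfold Function.uncurry
  fun_prop

lemma fej_eq (w : ℝ) (hw : w ≠ 0) : fej w = 2 * (1 - Real.cos (2 * π * w)) / (2 * π * w) ^ 2 := by
  have hp : 2 * π * w ≠ 0 := by positivity
  have : ∀ v ∈ Set.uIcc (0:ℝ) 1, HasDerivAt (fun v : ℝ => 2 * (1 - v) * (Real.sin (2 * π * v * w) / (2 * π * w))
      - 2 * (Real.cos (2 * π * v * w) / (2 * π * w) ^ 2)) (2 * (1 - v) * Real.cos (2 * π * v * w)) v := by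
    intro v _
    have l : HasDerivAt (fun v : ℝ => 2 * π * v * w) (2 * π * w) v := by
      have := ((hasDerivAt_id v).const_mul (2 * π)).mul_const w
      simpa using this
    have l2 : HasDerivAt (fun v : ℝ => 2 * (1 - v)) (-2) v := by
      have := ((hasDerivAt_id v).const_sub 1).const_mul 2
      simpa using this
    have := (l2.mul (l.sin.div_const (2 * π * w))).sub ((l.cos.div_const ((2 * π * w)^2)).const_mul 2)
    have e : -2 * (Real.sin (2 * π * v * w) / (2 * π * w)) + 2 * (1 - v) * (Real.cos (2 * π * v * w) * (2 * π * w) / (2 * π * w)) - 2 * (-Real.sin (2 * π * v * w) * (2 * π * w) / (2 * π * w) ^ 2) = 2 * (1 - v) * Real.cos (2 * π * v * w) := by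
      field_simp
      ring
    rw [e] at this
    exact this
  rw [fej, intervalIntegral.integral_eq_sub_of_hasDerivAt this (Continuous.intervalIntegrable (by fun_prop) _ _)]
  simp
  ring

lemma fej_nonneg (w : ℝ) : 0 ≤ fej w := by
  rcases eq_or_ne w 0 with rfl | hw
  · rw [fej]
    apply intervalIntegral.integral_nonneg (by norm_num)
    intro u hu
    simp at hu ⊢
    linarith
  · rw [fej_eq w hw]
    have := Real.cos_le_one (2 * π * w)
    apply div_nonneg _ (by positivity)
    linarith

lemma fej_le_one (w : ℝ) : fej w ≤ 1 := by
  have h1 : ∫ v in (0:ℝ)..1, 2 * (1 - v) = 1 := by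
    rw [intervalIntegral.integral_const_mul, intervalIntegral.integral_sub (by simp) (by simp)]
    simp
    norm_num
  rw [← h1, fej]
  apply intervalIntegral.integral_mono_on (by norm_num)
    (Continuous.intervalIntegrable (by fun_prop) _ _) (Continuous.intervalIntegrable (by fun_prop) _ _)
  intro v hv
  have := Real.cos_le_one (2 * π * v * w)
  have : 0 ≤ 1 - v := by linarith [hv.2]
  nlinarith

lemma fej_le (w : ℝ) : fej w ≤ 4 * (1 + |w|) ^ (-2:ℝ) := by
  rw [Real.rpow_neg (by positivity), ← div_eq_mul_inv, le_div_iff₀ (by positivity)]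
  norm_cast
  rcases le_or_gt |w| 1 with h | h
  · have := fej_le_one w
    have := fej_nonneg w
    have : (1 + |w|)^2 ≤ 4 := by nlinarith [abs_nonneg w]
    nlinarith
  · have hw : w ≠ 0 := by rintro rfl; simp at h; linarith
    have hb : fej w * |w|^2 ≤ 1 := by
      rw [fej_eq w hw, sq_abs]
      have e : 2 * (1 - Real.cos (2 * π * w)) / (2 * π * w) ^ 2 * w ^ 2 =
        2 * (1 - Real.cos (2 * π * w)) / (2 * π) ^ 2 := by field_simp
      rw [e, div_le_one (by positivity)]
      nlinarith [Real.neg_one_le_cos (2 * π * w), Real.pi_gt_three]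
    have := fej_nonneg w
    have : (1 + |w|)^2 ≤ 4 * |w|^2 := by nlinarith
    nlinarith

lemma tri_fourier (w : ℝ) : FourierTransform.fourier (fun x : ℝ => (tri x : ℂ)) w = (fej w : ℂ) := by
  rw [Real.fourier_real_eq_integral_exp_smul]
  set F : ℝ → ℂ := fun v => Complex.exp (↑(-2 * π * v * w) * I) • (tri v : ℂ) with hF
  have tc : Continuous tri := by unfold tri; fun_prop
  have Fc : Continuous F := by
    rw [hF]; fun_prop
  have F0 : ∀ v, v ∉ Set.Ioc (-1:ℝ) 1 → F v = 0 := by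
    intro v hv
    have : tri v = 0 := by
      unfold tri
      apply max_eq_left
      by_contra hc
      have : |v| < 1 := by linarith
      exact hv ⟨(abs_lt.1 this).1, (abs_lt.1 this).2.le⟩
    simp [hF, this]
  have e1 : ∫ v, F v = ∫ v in (-1:ℝ)..1, F v := by
    rw [intervalIntegral.integral_of_le (by norm_num)]
    exact (MeasureTheory.setIntegral_eq_integral_of_forall_compl_eq_zero F0).symm
  have e2 : ∫ v in (-1:ℝ)..1, F v = (∫ v in (-1:ℝ)..0, F v) + ∫ v in (0:ℝ)..1, F v :=
    (intervalIntegral.integral_add_adjacent_intervals (Fc.intervalIntegrable _ _) (Fc.intervalIntegrable _ _)).symm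
  have e3 : ∫ v in (-1:ℝ)..0, F v = ∫ v in (0:ℝ)..1, F (-v) := by
    rw [intervalIntegral.integral_comp_neg]; simp
  have Fi : IntervalIntegrable (fun v => F (-v)) MeasureTheory.volume 0 1 := (Fc.comp continuous_neg).intervalIntegrable _ _
  rw [e1, e2, e3, ← intervalIntegral.integral_add Fi (Fc.intervalIntegrable _ _),
    fej, ← intervalIntegral.integral_ofReal]
  apply intervalIntegral.integral_congr
  intro v hv
  rw [Set.uIcc_of_le (by norm_num)] at hv
  have t1 : tri v = 1 - v := by
    unfold tri
    rw [abs_of_nonneg hv.1]; exact max_eq_right (by linarith [hv.2])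
  have t2 : tri (-v) = 1 - v := by
    rw [← t1]; simp [tri]
  simp only [hF, t1, t2, smul_eq_mul]
  push_cast
  rw [Complex.cos]
  have a1 : -2 * (π:ℂ) * -v * w * I = 2 * π * v * w * I := by ring
  have a2 : -2 * (π:ℂ) * v * w * I = -(2 * π * v * w) * I := by ring
  rw [a1, a2]
  ring

lemma fej_integrable_aux : MeasureTheory.Integrable (fun w : ℝ => 4 * (1 + |w|) ^ (-2:ℝ)) :=
  (integrable_one_add_norm (E := ℝ) (r := 2) (by simp)).const_mul 4

lemma fej_integrable : MeasureTheory.Integrable fej :=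
  fej_integrable_aux.mono' fej_continuous.aestronglyMeasurable
    (Filter.Eventually.of_forall fun w => by
      rw [Real.norm_of_nonneg (fej_nonneg w)]; exact fej_le w)

lemma fej_inv (x : ℝ) : ∫ w : ℝ, Complex.exp (↑(2 * π * (w * x)) * I) * (fej w : ℂ) = (tri x : ℂ) := by
  have tc : Continuous (fun x : ℝ => (tri x : ℂ)) := by unfold tri; fun_prop
  have ti : MeasureTheory.Integrable (fun x : ℝ => (tri x : ℂ)) := by
    apply tc.integrable_of_hasCompactSupport
    apply HasCompactSupport.intro (isCompact_Icc (a := (-1:ℝ)) (b := 1))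
    intro v hv
    have : tri v = 0 := by
      unfold tri
      apply max_eq_left
      by_contra hc
      have : |v| < 1 := by linarith
      exact hv ⟨(abs_lt.1 this).1.le, (abs_lt.1 this).2.le⟩
    simp [this]
  have fe : FourierTransform.fourier (fun x : ℝ => (tri x : ℂ)) = fun w => (fej w : ℂ) := funext tri_fourier
  have fi : MeasureTheory.Integrable (FourierTransform.fourier (fun x : ℝ => (tri x : ℂ))) := by
    rw [fe]; exact fej_integrable.ofReal
  have := congrFun (tc.fourierInv_fourier_eq ti fi) x
  rw [fe, Real.fourierInv_eq'] at this
  rw [← this]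
  congr 1
  ext w
  simp [mul_comm]

lemma fej_integral : ∫ w, fej w = 1 := by
  have := fej_inv 0
  simp [tri] at this
  have e : ∫ w : ℝ, ((fej w : ℝ) : ℂ) = ((∫ w, fej w : ℝ) : ℂ) := integral_ofReal
  rw [e] at this
  exact_mod_cast this

end Stmt5

open Complex Real Finset
namespace Stmt5

/-- minus the logarithmic derivative -/
noncomputable def LD {q : ℕ} [NeZero q] (χ : DirichletCharacter ℂ q) (s : ℂ) : ℂ :=
  -(deriv (DirichletCharacter.LFunction χ) s / DirichletCharacter.LFunction χ s)

noncomputable def TN {q : ℕ} [NeZero q] (χ : DirichletCharacter ℂ q) (N : ℕ) (Y : ℝ) (s : ℂ) : ℂ :=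
  ∑ n ∈ Finset.range N, LSeries.term ((fun n : ℕ => χ (n : ZMod q)) * fun n => ((ArithmeticFunction.vonMangoldt n : ℝ) : ℂ)) s n
    * (tri (Real.log n / Y) : ℂ)

noncomputable def vert (Y w : ℝ) : ℂ := ((2 * π * w / Y : ℝ) : ℂ) * I

lemma vert_continuous (Y : ℝ) : Continuous (vert Y) := by unfold vert; fun_prop

lemma half_open : IsOpen {z : ℂ | 1/2 < z.re} := isOpen_lt continuous_const Complex.continuous_re

lemma LD_diff {q : ℕ} [NeZero q] (χ : DirichletCharacter ℂ q) (hχ : χ ≠ 1) (hR : dirichletRH χ) :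
    DifferentiableOn ℂ (LD χ) {z : ℂ | 1/2 < z.re} := by
  have dL : Differentiable ℂ (DirichletCharacter.LFunction χ) := DirichletCharacter.differentiable_LFunction hχ
  unfold LD
  apply DifferentiableOn.neg
  exact (dL.differentiableOn.deriv half_open).div dL.differentiableOn (fun z hz => L_ne_zero_right χ hχ hR z hz)

lemma vert_re (Y w : ℝ) (s : ℂ) : (s + vert Y w).re = s.re := by simp [vert]

lemma vert_norm (Y w : ℝ) (hY : 0 < Y) : ‖vert Y w‖ ≤ 2 * π / Y * |w| := by
  unfold vert
  rw [norm_mul, Complex.norm_I, mul_one, Complex.norm_real, Real.norm_eq_abs, abs_div, abs_mul,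
    abs_of_pos hY, abs_of_pos Real.two_pi_pos]
  apply le_of_eq; ring

lemma bound_integrable (c : ℝ) : MeasureTheory.Integrable (fun w : ℝ => c * (1 + |w|) ^ (-(3/2):ℝ)) :=
  (integrable_one_add_norm (E := ℝ) (r := 3/2) (by simp; norm_num)).const_mul c

lemma sqrt_fej_bound (a b : ℝ) (ha : 0 ≤ a) (hb : 0 ≤ b) (w : ℝ) :
    (a + b * |w|) ^ (1/2:ℝ) * fej w ≤ 4 * (a + b) ^ (1/2:ℝ) * (1 + |w|) ^ (-(3/2):ℝ) := by
  have h1 : (a + b * |w|) ^ (1/2:ℝ) ≤ (a + b) ^ (1/2:ℝ) * (1 + |w|) ^ (1/2:ℝ) := by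
    rw [← Real.mul_rpow (by positivity) (by positivity)]
    gcongr
    nlinarith [abs_nonneg w, mul_nonneg ha (abs_nonneg w)]
  calc _ ≤ ((a + b) ^ (1/2:ℝ) * (1 + |w|) ^ (1/2:ℝ)) * (4 * (1 + |w|) ^ (-2:ℝ)) := by
        gcongr
        · exact fej_nonneg w
        · exact fej_le w
    _ = 4 * (a+b) ^ (1/2:ℝ) * ((1 + |w|) ^ (1/2:ℝ) * (1 + |w|) ^ (-2:ℝ)) := by ring
    _ = _ := by
      rw [← Real.rpow_add (by positivity)]; norm_num

lemma LD_cont_vert {q : ℕ} [NeZero q] (χ : DirichletCharacter ℂ q) (hχ : χ ≠ 1) (hR : dirichletRH χ)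
    (Y : ℝ) (s : ℂ) (hs : 1/2 < s.re) : Continuous (fun w : ℝ => LD χ (s + vert Y w) * (fej w : ℂ)) := by
  refine Continuous.mul ?_ (Complex.continuous_ofReal.comp fej_continuous)
  exact (LD_diff χ hχ hR).continuousOn.comp_continuous (continuous_const.add (vert_continuous Y))
    (fun w => by show 1/2 < (s + vert Y w).re; rw [vert_re]; exact hs)

lemma LD_int_vert {q : ℕ} [NeZero q] (χ : DirichletCharacter ℂ q) (hχ : χ ≠ 1) (hR : dirichletRH χ)
    (Y : ℝ) (hY : 0 < Y) (s : ℂ) (hs : 1/2 < s.re) :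
    MeasureTheory.Integrable (fun w : ℝ => LD χ (s + vert Y w) * (fej w : ℂ)) := by
  obtain ⟨K, hK, H⟩ := L_lower χ hχ hR (min (s.re - 1/2) 1) (lt_min (by linarith) (by norm_num)) (min_le_right _ _)
  refine (bound_integrable (K * (4 * ((‖s‖ + 1) + 2 * π / Y) ^ (1/2:ℝ)))).mono'
    (LD_cont_vert χ hχ hR Y s hs).aestronglyMeasurable (Filter.Eventually.of_forall fun w => ?_)
  rw [norm_mul, Complex.norm_real, Real.norm_of_nonneg (fej_nonneg w), mul_assoc K]
  have h1 := (H (s + vert Y w) (by rw [vert_re]; linarith [min_le_left (s.re - 1/2) 1])).2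
  have h2 : ‖s + vert Y w‖ + 1 ≤ (‖s‖ + 1) + 2 * π / Y * |w| := by
    have := norm_add_le s (vert Y w)
    have := vert_norm Y w hY
    linarith
  calc _ ≤ (K * ((‖s‖ + 1) + 2 * π / Y * |w|) ^ (1/2:ℝ)) * fej w := by
        gcongr
        · exact fej_nonneg w
        · unfold LD
          rw [norm_neg]
          refine h1.trans ?_
          gcongr
    _ = K * (((‖s‖ + 1) + 2 * π / Y * |w|) ^ (1/2:ℝ) * fej w) := by ring
    _ ≤ _ := mul_le_mul_of_nonneg_left (sqrt_fej_bound _ _ (by positivity) (by positivity) w) (by positivity)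

lemma fej_param_diff {q : ℕ} [NeZero q] (χ : DirichletCharacter ℂ q) (hχ : χ ≠ 1) (hR : dirichletRH χ)
    (Y : ℝ) (hY : 0 < Y) (s : ℂ) (hs : 1/2 < s.re) :
    DifferentiableAt ℂ (fun s => ∫ w : ℝ, LD χ (s + vert Y w) * (fej w : ℂ)) s := by
  set ε := min ((s.re - 1/2)/3) 1 with hε
  have ε0 : 0 < ε := lt_min (by linarith) (by norm_num)
  have ε1 : ε ≤ 1 := min_le_right _ _
  have ε2 : ε ≤ (s.re - 1/2)/3 := min_le_left _ _
  obtain ⟨K, hK, H⟩ := L_lower χ hχ hR ε ε0 ε1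
  have dLD := LD_diff χ hχ hR
  have dLD2 : DifferentiableOn ℂ (deriv (LD χ)) {z : ℂ | 1/2 < z.re} := dLD.deriv half_open
  have reb : ∀ z ∈ Metric.ball s ε, 1/2 + 2 * ε < z.re ∧ ‖z‖ ≤ ‖s‖ + 1 := by
    intro z hz
    have hz : ‖z - s‖ < ε := by simpa [dist_eq_norm] using hz
    constructor
    · have := (abs_le.1 (Complex.abs_re_le_norm (z - s))).1
      simp only [Complex.sub_re] at this
      linarith
    · have := norm_sub_norm_le z s
      linarith
  have main := hasDerivAt_integral_of_dominated_loc_of_deriv_le (μ := MeasureTheory.volume) (𝕜 := ℂ)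
    (F := fun s (w:ℝ) => LD χ (s + vert Y w) * (fej w : ℂ))
    (F' := fun s (w:ℝ) => deriv (LD χ) (s + vert Y w) * (fej w : ℂ)) (x₀ := s) (s := Metric.ball s ε)
    (bound := fun w => (K/ε * (4 * ((‖s‖ + 3) + 2 * π / Y) ^ (1/2:ℝ))) * (1 + |w|) ^ (-(3/2):ℝ))
    (Metric.ball_mem_nhds s ε0) ?_ (LD_int_vert χ hχ hR Y hY s hs) ?_ ?_ (bound_integrable _) ?_
  · exact main.2.differentiableAt
  · filter_upwards [Metric.ball_mem_nhds s ε0] with z hz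
    exact (LD_cont_vert χ hχ hR Y z (by linarith [(reb z hz).1])).aestronglyMeasurable
  · apply Continuous.aestronglyMeasurable
    refine Continuous.mul ?_ (Complex.continuous_ofReal.comp fej_continuous)
    exact dLD2.continuousOn.comp_continuous (continuous_const.add (vert_continuous Y))
      (fun w => by show 1/2 < (s + vert Y w).re; rw [vert_re]; exact hs)
  · filter_upwards with w z hz
    obtain ⟨z1, z2⟩ := reb z hz
    rw [norm_mul, Complex.norm_real, Real.norm_of_nonneg (fej_nonneg w), mul_assoc (K/ε)]
    have hd : ‖deriv (LD χ) (z + vert Y w)‖ ≤ (K * ((‖s‖ + 3) + 2 * π / Y * |w|) ^ (1/2:ℝ)) / ε := by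
      apply Complex.norm_deriv_le_of_forall_mem_sphere_norm_le ε0
      · apply DifferentiableOn.diffContOnCl_ball dLD
        intro u hu
        have hu : ‖u - (z + vert Y w)‖ ≤ ε := by simpa [dist_eq_norm] using hu
        have := (abs_le.1 (Complex.abs_re_le_norm (u - (z + vert Y w)))).1
        rw [Complex.sub_re, vert_re] at this
        show 1/2 < u.re
        linarith
      · intro u hu
        have hu : ‖u - (z + vert Y w)‖ = ε := by simpa [dist_eq_norm] using hu
        have := (abs_le.1 (Complex.abs_re_le_norm (u - (z + vert Y w)))).1
        rw [Complex.sub_re, vert_re] at this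
        unfold LD
        rw [norm_neg]
        refine (H u (by linarith)).2.trans ?_
        have a1 := norm_sub_norm_le u (z + vert Y w)
        have a2 := norm_add_le z (vert Y w)
        have a3 := vert_norm Y w hY
        exact mul_le_mul_of_nonneg_left (Real.rpow_le_rpow (by positivity) (by linarith) (by norm_num)) (by positivity)
    calc _ ≤ ((K * ((‖s‖ + 3) + 2 * π / Y * |w|) ^ (1/2:ℝ)) / ε) * fej w := by
          gcongr
          exact fej_nonneg w
      _ = K / ε * (((‖s‖ + 3) + 2 * π / Y * |w|) ^ (1/2:ℝ) * fej w) := by ring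
      _ ≤ _ := mul_le_mul_of_nonneg_left (sqrt_fej_bound _ _ (by positivity) (by positivity) w) (by positivity)
  · filter_upwards with w z hz
    have hz' : 1/2 < (z + vert Y w).re := by rw [vert_re]; linarith [(reb z hz).1]
    have : HasDerivAt (LD χ) (deriv (LD χ) (z + vert Y w)) (z + vert Y w) :=
      ((dLD _ hz').differentiableAt (half_open.mem_nhds hz')).hasDerivAt
    exact (this.comp_add_const z _).mul_const _

lemma term_vert (f : ℕ → ℂ) (Y : ℝ) (s : ℂ) (n : ℕ) (w : ℝ) :
    LSeries.term f (s + vert Y w) n = LSeries.term f s n * Complex.exp (↑(2 * π * (w * (-(Real.log n / Y)))) * I) := by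
  rcases eq_or_ne n 0 with rfl | hn
  · simp
  · rw [LSeries.term_of_ne_zero hn, LSeries.term_of_ne_zero hn]
    have nc : (n:ℂ) ≠ 0 := by exact_mod_cast hn
    rw [Complex.cpow_add _ _ nc, ← div_div, div_eq_mul_inv (f n / _)]
    congr 1
    rw [Complex.cpow_def_of_ne_zero nc, ← Complex.exp_neg, ← Complex.ofReal_natCast,
      ← Complex.ofReal_log (Nat.cast_nonneg n), vert]
    congr 1
    push_cast
    ring

lemma tri_even (x : ℝ) : tri (-x) = tri x := by simp [tri]

lemma fej_formula_aux {q : ℕ} [NeZero q] (χ : DirichletCharacter ℂ q)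
    (Y : ℝ) (hY : 0 < Y) (N : ℕ) (hN : Real.exp Y ≤ N) (s : ℂ) (hs : 1 < s.re) :
    TN χ N Y s = ∫ w : ℝ, LD χ (s + vert Y w) * (fej w : ℂ) := by
  set f := ((fun n : ℕ => χ (n : ZMod q)) * fun n => ((ArithmeticFunction.vonMangoldt n : ℝ) : ℂ)) with hf
  have hLD : ∀ w, LD χ (s + vert Y w) = ∑' n, LSeries.term f (s + vert Y w) n := by
    intro w
    have h1 : 1 < (s + vert Y w).re := by rw [vert_re]; exact hs
    have := DirichletCharacter.LSeries_twist_vonMangoldt_eq χ h1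
    unfold LD
    rw [DirichletCharacter.deriv_LFunction_eq_deriv_LSeries _ h1, DirichletCharacter.LFunction_eq_LSeries _ h1, ← neg_div, ← this]
    rfl
  have hsum : Summable (fun n => LSeries.term f s n) :=
    DirichletCharacter.LSeriesSummable_twist_vonMangoldt χ hs
  have hnorm : ∀ n w, ‖LSeries.term f (s + vert Y w) n * (fej w : ℂ)‖ = ‖LSeries.term f s n‖ * fej w := by
    intro n w
    rw [term_vert, norm_mul, norm_mul, Complex.norm_exp_ofReal_mul_I, mul_one, Complex.norm_real,
      Real.norm_of_nonneg (fej_nonneg w)]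
  have hintg : ∀ n, MeasureTheory.Integrable (fun w : ℝ => LSeries.term f (s + vert Y w) n * (fej w : ℂ)) := by
    intro n
    refine (fej_integrable.const_mul ‖LSeries.term f s n‖).mono' ?_ (Filter.Eventually.of_forall fun w => (hnorm n w).le)
    simp_rw [term_vert]
    have := fej_continuous
    exact Continuous.aestronglyMeasurable (by fun_prop)
  have hs2 : Summable (fun n => ∫ w : ℝ, ‖LSeries.term f (s + vert Y w) n * (fej w : ℂ)‖) := by
    simp_rw [hnorm, MeasureTheory.integral_const_mul, fej_integral, mul_one]
    exact hsum.norm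
  have hs3 := MeasureTheory.hasSum_integral_of_summable_integral_norm hintg hs2
  have e1 : ∀ n, ∫ w : ℝ, LSeries.term f (s + vert Y w) n * (fej w : ℂ) =
      LSeries.term f s n * (tri (Real.log n / Y) : ℂ) := by
    intro n
    have : (fun w : ℝ => LSeries.term f (s + vert Y w) n * (fej w : ℂ)) = fun w : ℝ => LSeries.term f s n *
        (Complex.exp (↑(2 * π * (w * (-(Real.log n / Y)))) * I) * (fej w : ℂ)) := by
      ext w; rw [term_vert, mul_assoc]
    rw [this, MeasureTheory.integral_const_mul, fej_inv, tri_even]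
  simp_rw [e1] at hs3
  simp_rw [tsum_mul_right, ← hLD] at hs3
  rw [← hs3.tsum_eq, TN]
  symm
  apply tsum_eq_sum
  intro n hn
  have hn : N ≤ n := by simpa using hn
  have : tri (Real.log n / Y) = 0 := by
    unfold tri
    apply max_eq_left
    have h1 : Y ≤ Real.log n := by
      rw [Real.le_log_iff_exp_le]
      · exact hN.trans (by exact_mod_cast hn)
      · exact lt_of_lt_of_le (Real.exp_pos Y) (hN.trans (by exact_mod_cast hn))
    have h2 : 1 ≤ Real.log n / Y := by rw [le_div_iff₀ hY]; linarith
    have := le_abs_self (Real.log n / Y)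
    linarith
  rw [this]; simp

lemma term_differentiable (f : ℕ → ℂ) (n : ℕ) : Differentiable ℂ (fun s => LSeries.term f s n) := by
  rcases eq_or_ne n 0 with rfl | hn
  · simp
  · simp_rw [LSeries.term_of_ne_zero hn]
    have nc : (n:ℂ) ≠ 0 := by exact_mod_cast hn
    intro s
    refine DifferentiableAt.div (by fun_prop) ?_ ?_
    · exact DifferentiableAt.const_cpow differentiableAt_id (Or.inl nc)
    · simp [nc]

lemma fej_formula {q : ℕ} [NeZero q] (χ : DirichletCharacter ℂ q) (hχ : χ ≠ 1) (hR : dirichletRH χ)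
    (Y : ℝ) (hY : 0 < Y) (N : ℕ) (hN : Real.exp Y ≤ N) (s : ℂ) (hs : 1/2 < s.re) :
    TN χ N Y s = ∫ w : ℝ, LD χ (s + vert Y w) * (fej w : ℂ) := by
  have a1 : AnalyticOnNhd ℂ (TN χ N Y) {z : ℂ | 1/2 < z.re} := by
    apply DifferentiableOn.analyticOnNhd _ half_open
    apply Differentiable.differentiableOn
    unfold TN
    apply Differentiable.fun_sum
    intro n _
    exact (term_differentiable _ n).mul_const _
  have a2 : AnalyticOnNhd ℂ (fun s => ∫ w : ℝ, LD χ (s + vert Y w) * (fej w : ℂ)) {z : ℂ | 1/2 < z.re} := by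
    apply DifferentiableOn.analyticOnNhd _ half_open
    intro z hz
    exact (fej_param_diff χ hχ hR Y hY z hz).differentiableWithinAt
  have pc : IsPreconnected {z : ℂ | 1/2 < z.re} := (convex_halfSpace_re_gt (1/2)).isPreconnected
  refine a1.eqOn_of_preconnected_of_eventuallyEq a2 pc (z₀ := 2) (by norm_num) ?_ hs
  have : {z : ℂ | 1 < z.re} ∈ nhds (2:ℂ) :=
    (isOpen_lt continuous_const Complex.continuous_re).mem_nhds (by simp)
  filter_upwards [this] with z hz
  exact fej_formula_aux χ Y hY N hN z hz

end Stmt5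

open Complex Real Finset
namespace Stmt5

lemma TN_bound : ∃ C : ℝ, 1 ≤ C ∧ ∀ (q : ℕ) [NeZero q], q ≠ 1 → ∀ χ : DirichletCharacter ℂ q, χ.IsPrimitive →
    dirichletRH χ → ∀ (Y : ℝ) (N : ℕ) (s : ℂ), Real.log 2 ≤ Y → Real.exp Y ≤ N → 1/2 < s.re →
    (TN χ N Y s).re ≤ C * Real.log (q * ‖s + 2‖) := by
  obtain ⟨C, hC, H⟩ := logDeriv_bound
  set D := ∫ w : ℝ, (4 * (1 + 10:ℝ) ^ (1/2:ℝ)) * (1 + |w|) ^ (-(3/2):ℝ) with hD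
  have hD0 : 0 ≤ D := by
    apply MeasureTheory.integral_nonneg
    intro w
    show 0 ≤ _
    positivity
  have hlC : 0 ≤ Real.log C := Real.log_nonneg hC
  refine ⟨1 + Real.log C + D, by linarith, ?_⟩
  intro q _ hq χ hprim hR Y N s hY hN hs
  have hχ := primitive_ne_one hq χ hprim
  have l2 := Real.log_two_gt_d9
  have hY0 : 0 < Y := by linarith
  have hY10 : 2 * π / Y ≤ 10 := by
    rw [div_le_iff₀ hY0]
    have := Real.pi_lt_d2
    linarith
  have hq2 : (2:ℝ) ≤ q := by
    have : 2 ≤ q := by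
      have := NeZero.ne q
      omega
    exact_mod_cast this
  have hs2 : 5/2 ≤ ‖s + 2‖ := by
    have := Complex.re_le_norm (s+2)
    simp at this
    linarith
  set Q := Real.log (q * ‖s + 2‖) with hQ
  have hQ1 : 1 ≤ Q := by
    rw [hQ, Real.le_log_iff_exp_le (by positivity)]
    have := Real.exp_one_lt_d9
    nlinarith
  rw [fej_formula χ hχ hR Y hY0 N hN s hs]
  have hi := LD_int_vert χ hχ hR Y hY0 s hs
  have e : (∫ w : ℝ, LD χ (s + vert Y w) * (fej w : ℂ)).re = ∫ w : ℝ, (LD χ (s + vert Y w) * (fej w : ℂ)).re :=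
    (integral_re hi).symm
  rw [e]
  calc ∫ w : ℝ, (LD χ (s + vert Y w) * (fej w : ℂ)).re
      ≤ ∫ w : ℝ, ((1/2 * (Real.log C + Q)) * fej w + (4 * (1 + 10:ℝ) ^ (1/2:ℝ)) * (1 + |w|) ^ (-(3/2):ℝ)) := by
        apply MeasureTheory.integral_mono hi.re ((fej_integrable.const_mul _).add (bound_integrable _))
        intro w
        show (LD χ (s + vert Y w) * (fej w : ℂ)).re ≤ (1/2 * (Real.log C + Q)) * fej w + (4 * (1 + 10:ℝ) ^ (1/2:ℝ)) * (1 + |w|) ^ (-(3/2):ℝ)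
        rw [Complex.re_mul_ofReal]
        have h1 := H q hq χ hprim hR (s + vert Y w) (by rw [vert_re]; exact hs)
        have h2 : ‖s + vert Y w + 2‖ ≤ ‖s + 2‖ * (1 + 10 * |w|) := by
          have a1 : ‖s + vert Y w + 2‖ ≤ ‖s + 2‖ + ‖vert Y w‖ := by
            rw [add_right_comm]; exact norm_add_le _ _
          have a2 := vert_norm Y w hY0
          have a3 : 2 * π / Y * |w| ≤ 10 * |w| := by gcongr
          nlinarith [abs_nonneg w]
        have h0 : 0 < ‖s + vert Y w + 2‖ := by
          have := Complex.re_le_norm (s + vert Y w + 2)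
          rw [Complex.add_re, vert_re] at this
          simp at this
          linarith
        have h3 : Real.log (C * q * ‖s + vert Y w + 2‖) ≤ Real.log C + Q + 2 * (1 + 10 * |w|) ^ (1/2:ℝ) := by
          calc _ ≤ Real.log (C * ((q * ‖s+2‖) * (1 + 10 * |w|))) := by
                apply Real.log_le_log (by positivity)
                rw [mul_assoc, mul_assoc]
                gcongr
            _ = Real.log C + Q + Real.log (1 + 10 * |w|) := by
                rw [Real.log_mul (by positivity) (by positivity), Real.log_mul (by positivity) (by positivity)]
                ring
            _ ≤ _ := by
                have := Real.log_le_rpow_div (x := 1 + 10 * |w|) (by positivity) (ε := 1/2) (by norm_num)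
                linarith
        have h4 : (LD χ (s + vert Y w)).re ≤ 1/2 * (Real.log C + Q) + (1 + 10 * |w|) ^ (1/2:ℝ) := by
          unfold LD
          rw [Complex.neg_re]
          linarith
        have h5 := sqrt_fej_bound 1 10 (by norm_num) (by norm_num) w
        have h6 := mul_le_mul_of_nonneg_right h4 (fej_nonneg w)
        nlinarith
    _ = 1/2 * (Real.log C + Q) + D := by
        rw [MeasureTheory.integral_add (fej_integrable.const_mul _) (bound_integrable _), MeasureTheory.integral_const_mul,
          fej_integral, mul_one]
    _ ≤ _ := by nlinarith

end Stmt5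

open Complex Real Finset
namespace Stmt5

noncomputable def lf {q : ℕ} [NeZero q] (χ : DirichletCharacter ℂ q) (n : ℕ) : ℂ :=
  χ (n : ZMod q) * ((ArithmeticFunction.vonMangoldt n : ℝ) : ℂ) / ((Real.log n : ℝ) : ℂ)

noncomputable def wt (X : ℝ) (n : ℕ) : ℝ := (max 0 (1 - Real.log n / X)) ^ 2

noncomputable def PN {q : ℕ} [NeZero q] (χ : DirichletCharacter ℂ q) (N : ℕ) (X : ℝ) (s : ℂ) : ℂ :=
  ∑ n ∈ Finset.range N, LSeries.term (lf χ) s n * (wt X n : ℂ)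

lemma hasDerivAt_possq (u : ℝ) : HasDerivAt (fun u : ℝ => (max 0 u) ^ 2) (2 * max 0 u) u := by
  rcases lt_trichotomy u 0 with h | h | h
  · rw [max_eq_left h.le, mul_zero]
    apply (hasDerivAt_const u (0:ℝ)).congr_of_eventuallyEq
    filter_upwards [gt_mem_nhds h] with v hv
    simp [max_eq_left (le_of_lt hv)]
  · subst h
    simp only [max_self, mul_zero]
    rw [hasDerivAt_iff_isLittleO]
    have : (fun x : ℝ => (max 0 x) ^ 2 - (max 0 (0:ℝ)) ^ 2 - (x - 0) • (0:ℝ)) =O[nhds 0] fun x => x ^ 2 := by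
      apply Asymptotics.IsBigO.of_bound 1
      filter_upwards with x
      simp
      rcases le_total 0 x with h | h
      · simp [max_eq_right h]
      · simp [max_eq_left h, sq_nonneg]
    refine this.trans_isLittleO ?_
    simpa using Asymptotics.isLittleO_pow_id (𝕜 := ℝ) (n := 2) (by norm_num)
  · rw [max_eq_right h.le]
    have h2 : HasDerivAt (fun v : ℝ => v ^ 2) (2 * u) u := by simpa using hasDerivAt_pow 2 u
    apply h2.congr_of_eventuallyEq
    filter_upwards [lt_mem_nhds h] with v hv
    simp [max_eq_right (le_of_lt hv)]

lemma hasDerivAt_wt (n : ℕ) (X : ℝ) (hX : 0 < X) :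
    HasDerivAt (fun X => wt X n) (2 / X ^ 2 * (Real.log n * tri (Real.log n / X))) X := by
  have h1 : HasDerivAt (fun X : ℝ => 1 - Real.log n / X) (Real.log n / X ^ 2) X := by
    have := ((hasDerivAt_inv hX.ne').const_mul (Real.log n)).const_sub 1
    have e : -(Real.log n * -(X ^ 2)⁻¹) = Real.log n / X ^ 2 := by ring
    rw [e] at this
    exact this
  have h2 := (hasDerivAt_possq (1 - Real.log n / X)).comp X h1
  have e : 2 * max 0 (1 - Real.log n / X) * (Real.log n / X ^ 2) = 2 / X ^ 2 * (Real.log n * tri (Real.log n / X)) := by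
    unfold tri
    rw [abs_of_nonneg (div_nonneg (Real.log_natCast_nonneg n) hX.le)]
    ring
  rw [e] at h2
  exact h2

lemma lf_term_log {q : ℕ} [NeZero q] (χ : DirichletCharacter ℂ q) (s : ℂ) (n : ℕ) :
    LSeries.term (lf χ) s n * (Real.log n : ℂ) =
    LSeries.term ((fun n : ℕ => χ (n : ZMod q)) * fun n => ((ArithmeticFunction.vonMangoldt n : ℝ) : ℂ)) s n := by
  rcases eq_or_ne n 0 with rfl | hn
  · simp
  rcases eq_or_ne n 1 with rfl | hn1
  · simp [LSeries.term]
  rw [LSeries.term_of_ne_zero hn, LSeries.term_of_ne_zero hn, lf, Pi.mul_apply]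
  have : Real.log n ≠ 0 := by
    have : (2:ℝ) ≤ n := by
      have : 2 ≤ n := by omega
      exact_mod_cast this
    exact (Real.log_pos (by linarith)).ne'
  have : ((Real.log n : ℝ) : ℂ) ≠ 0 := by exact_mod_cast this
  field_simp

lemma PN_re_deriv {q : ℕ} [NeZero q] (χ : DirichletCharacter ℂ q) (N : ℕ) (X : ℝ) (hX : 0 < X) (s : ℂ) :
    HasDerivAt (fun X => (PN χ N X s).re) (2 / X ^ 2 * (TN χ N X s).re) X := by
  have h1 : HasDerivAt (fun X => ∑ n ∈ Finset.range N, (LSeries.term (lf χ) s n).re * wt X n)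
      (∑ n ∈ Finset.range N, (LSeries.term (lf χ) s n).re * (2 / X ^ 2 * (Real.log n * tri (Real.log n / X)))) X :=
    HasDerivAt.fun_sum fun n _ => (hasDerivAt_wt n X hX).const_mul _
  have e1 : (fun X => (PN χ N X s).re) = fun X => ∑ n ∈ Finset.range N, (LSeries.term (lf χ) s n).re * wt X n := by
    ext X
    simp [PN, Complex.re_sum, Complex.re_mul_ofReal]
  have e2 : 2 / X ^ 2 * (TN χ N X s).re = ∑ n ∈ Finset.range N, (LSeries.term (lf χ) s n).re * (2 / X ^ 2 * (Real.log n * tri (Real.log n / X))) := by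
    rw [TN, Complex.re_sum, Finset.mul_sum]
    refine Finset.sum_congr rfl fun n _ => ?_
    rw [Complex.re_mul_ofReal, ← lf_term_log, Complex.re_mul_ofReal]
    ring
  rw [e1, e2]
  exact h1

/-- monotonicity in the length -/
lemma PN_mono : ∃ C : ℝ, 1 ≤ C ∧ ∀ (q : ℕ) [NeZero q], q ≠ 1 → ∀ χ : DirichletCharacter ℂ q, χ.IsPrimitive →
    dirichletRH χ → ∀ (X X' : ℝ) (N : ℕ) (s : ℂ), Real.log 2 ≤ X → X ≤ X' → Real.exp X' ≤ N → 1/2 < s.re →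
    (PN χ N X' s).re - (PN χ N X s).re ≤ C * Real.log (q * ‖s + 2‖) / X := by
  obtain ⟨C, hC, H⟩ := TN_bound
  refine ⟨2 * C, by linarith, ?_⟩
  intro q _ hq χ hprim hR X X' N s hX hXX hN hs
  have l2 := Real.log_two_gt_d9
  have hX0 : 0 < X := by linarith
  set Q := C * Real.log (q * ‖s + 2‖) with hQ
  have hQ0 : 0 ≤ Q := by
    apply mul_nonneg (by linarith) (Real.log_nonneg _)
    have : (1:ℝ) ≤ q := by
      have := NeZero.one_le (n := q)
      exact_mod_cast this
    have := Complex.re_le_norm (s+2)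
    simp at this
    nlinarith
  have hd : ∀ x ∈ Set.Icc X X', HasDerivAt (fun X => (PN χ N X s).re + 2 * Q * X⁻¹)
      (2 / x ^ 2 * (TN χ N x s).re + 2 * Q * -(x ^ 2)⁻¹) x := by
    intro x hx
    have hx0 : 0 < x := lt_of_lt_of_le hX0 hx.1
    exact (PN_re_deriv χ N x hx0 s).add ((hasDerivAt_inv hx0.ne').const_mul _)
  have anti : AntitoneOn (fun X => (PN χ N X s).re + 2 * Q * X⁻¹) (Set.Icc X X') := by
    apply antitoneOn_of_deriv_nonpos (convex_Icc _ _)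
    · exact fun x hx => (hd x hx).continuousAt.continuousWithinAt
    · exact fun x hx => (hd x (interior_subset hx)).differentiableAt.differentiableWithinAt
    · intro x hx
      have hx := interior_subset hx
      have hx0 : 0 < x := lt_of_lt_of_le hX0 hx.1
      rw [(hd x hx).deriv]
      have := H q hq χ hprim hR x N s (hX.trans hx.1) ((Real.exp_le_exp.2 hx.2).trans hN) hs
      have e : 2 / x ^ 2 * (TN χ N x s).re + 2 * Q * -(x ^ 2)⁻¹ = 2 / x ^ 2 * ((TN χ N x s).re - Q) := by ring
      rw [e]
      exact mul_nonpos_of_nonneg_of_nonpos (by positivity) (by linarith)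
  have := anti (Set.left_mem_Icc.2 hXX) (Set.right_mem_Icc.2 hXX) hXX
  simp only at this
  have h3 : 0 ≤ 2 * Q * X'⁻¹ := by
    have : 0 < X' := by linarith
    positivity
  have e : 2 * C * Real.log (q * ‖s + 2‖) / X = 2 * Q * X⁻¹ := by rw [hQ]; ring
  rw [e]
  linarith

end Stmt5

open Complex Real Finset
namespace Stmt5

lemma wt_zero (X : ℝ) (hX : 0 < X) (n N : ℕ) (hN : Real.exp X ≤ N) (hn : N ≤ n) : wt X n = 0 := by
  have h1 : X ≤ Real.log n := by
    rw [Real.le_log_iff_exp_le]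
    · exact hN.trans (by exact_mod_cast hn)
    · exact lt_of_lt_of_le (Real.exp_pos X) (hN.trans (by exact_mod_cast hn))
  have h2 : 1 ≤ Real.log n / X := by rw [le_div_iff₀ hX]; linarith
  unfold wt
  rw [max_eq_left (by linarith)]
  norm_num

lemma wt_nonneg (X : ℝ) (n : ℕ) : 0 ≤ wt X n := sq_nonneg _

lemma wt_le_one (X : ℝ) (hX : 0 < X) (n : ℕ) : wt X n ≤ 1 := by
  unfold wt
  have : 0 ≤ Real.log n / X := div_nonneg (Real.log_natCast_nonneg n) hX.le
  apply pow_le_one₀ (le_max_left _ _)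
  exact max_le (by norm_num) (by linarith)

lemma PN_tsum {q : ℕ} [NeZero q] (χ : DirichletCharacter ℂ q) (N : ℕ) (X : ℝ) (hX : 0 < X) (hN : Real.exp X ≤ N) (s : ℂ) :
    PN χ N X s = ∑' n, LSeries.term (lf χ) s n * (wt X n : ℂ) := by
  symm
  apply tsum_eq_sum
  intro n hn
  rw [wt_zero X hX n N hN (by simpa using hn)]
  simp

lemma wt_tendsto (n : ℕ) : Filter.Tendsto (fun X : ℕ => wt X n) Filter.atTop (nhds 1) := by
  have h1 : Filter.Tendsto (fun X : ℕ => 1 - Real.log n / (X:ℝ)) Filter.atTop (nhds (1 - 0)) :=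
    tendsto_const_nhds.sub (tendsto_const_div_atTop_nhds_zero_nat _)
  have h2 := ((tendsto_const_nhds (x := (0:ℝ))).max h1).pow 2
  simpa [wt] using h2

lemma lf_summable {q : ℕ} [NeZero q] (χ : DirichletCharacter ℂ q) (s : ℂ) (hs : 1 < s.re) :
    LSeriesSummable (lf χ) s := by
  have h := DirichletCharacter.LSeriesSummable_twist_vonMangoldt χ hs
  have h2 : Summable (fun n => 2 * ‖LSeries.term ((fun n : ℕ => χ (n : ZMod q)) * fun n => ((ArithmeticFunction.vonMangoldt n : ℝ) : ℂ)) s n‖) :=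
    h.norm.mul_left 2
  refine Summable.of_norm_bounded h2 fun n => ?_
  rw [← lf_term_log, norm_mul, Complex.norm_real]
  rcases lt_or_ge n 2 with hn | hn
  · have : n = 0 ∨ n = 1 := by omega
    rcases this with rfl | rfl <;> simp [LSeries.term, lf]
  · have : (1:ℝ)/2 ≤ ‖Real.log n‖ := by
      have h2 : Real.log 2 ≤ Real.log n := Real.log_le_log (by norm_num) (by exact_mod_cast hn)
      have := Real.log_two_gt_d9
      rw [Real.norm_of_nonneg (by linarith)]
      linarith
    nlinarith [norm_nonneg (LSeries.term (lf χ) s n)]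

lemma PN_limit {q : ℕ} [NeZero q] (χ : DirichletCharacter ℂ q) (N : ℕ → ℕ) (hN : ∀ m : ℕ, Real.exp m ≤ N m)
    (s : ℂ) (hs : 1 < s.re) :
    Filter.Tendsto (fun m : ℕ => PN χ (N m) m s) Filter.atTop (nhds (LSeries (lf χ) s)) := by
  have h1 : Filter.Tendsto (fun m : ℕ => ∑' n, LSeries.term (lf χ) s n * (wt m n : ℂ)) Filter.atTop
      (nhds (∑' n, LSeries.term (lf χ) s n)) := by
    apply tendsto_tsum_of_dominated_convergence (lf_summable χ s hs).norm
    · intro n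
      have := (Complex.continuous_ofReal.tendsto _).comp (wt_tendsto n)
      simpa using (tendsto_const_nhds (x := LSeries.term (lf χ) s n)).mul this
    · filter_upwards [Filter.eventually_gt_atTop 0] with m hm n
      have hm : (0:ℝ) < m := by exact_mod_cast hm
      rw [norm_mul, Complex.norm_real, Real.norm_of_nonneg (wt_nonneg _ _)]
      exact mul_le_of_le_one_right (norm_nonneg _) (wt_le_one _ hm n)
  refine h1.congr' ?_
  filter_upwards [Filter.eventually_gt_atTop 0] with m hm
  have hm : (0:ℝ) < m := by exact_mod_cast hm
  rw [PN_tsum χ (N m) m hm (hN m)]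

lemma exp_lf {q : ℕ} [NeZero q] (χ : DirichletCharacter ℂ q) (s : ℂ) (hs : 1 < s.re) :
    Complex.exp (LSeries (lf χ) s) = DirichletCharacter.LFunction χ s := by
  rw [DirichletCharacter.LFunction_eq_LSeries χ hs, ← DirichletCharacter.LSeries_eq_exp_LSeries χ hs]
  rfl

lemma PN_diff {q : ℕ} [NeZero q] (χ : DirichletCharacter ℂ q) (N : ℕ) (X : ℝ) : Differentiable ℂ (PN χ N X) := by
  unfold PN
  apply Differentiable.fun_sum
  intro n _
  exact (term_differentiable _ n).mul_const _

lemma PN_indep {q : ℕ} [NeZero q] (χ : DirichletCharacter ℂ q) (N N' : ℕ) (X : ℝ) (hX : 0 < X)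
    (hN : Real.exp X ≤ N) (hN' : Real.exp X ≤ N') (s : ℂ) : PN χ N X s = PN χ N' X s := by
  rw [PN_tsum χ N X hX hN, PN_tsum χ N' X hX hN']

lemma key_ineq : ∃ C : ℝ, 1 ≤ C ∧ ∀ (q : ℕ) [NeZero q], q ≠ 1 → ∀ χ : DirichletCharacter ℂ q, χ.IsPrimitive →
    dirichletRH χ → ∀ (X : ℝ) (N : ℕ) (s : ℂ), Real.log 2 ≤ X → Real.exp X ≤ N → 1/2 < s.re → s.re ≤ 2 →
    Real.log ‖DirichletCharacter.LFunction χ s‖ ≤ (PN χ N X s).re + C * Real.log (q * ‖s + 2‖) / X := by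
  obtain ⟨C, hC, H⟩ := PN_mono
  refine ⟨C, hC, ?_⟩
  intro q _ hq χ hprim hR X N s hX hN hs hs2
  have hχ := primitive_ne_one hq χ hprim
  have hX0 : 0 < X := by have := Real.log_two_gt_d9; linarith
  have hq1 : (1:ℝ) ≤ q := by
    have := NeZero.one_le (n := q)
    exact_mod_cast this
  -- the centre
  set c : ℂ := (3:ℂ) + s.im * I with hc
  have hcre : c.re = 3 := by simp [hc]
  have hsc : ‖s - c‖ = 3 - s.re := by
    have : s - c = ((s.re - 3 : ℝ) : ℂ) := by
      apply Complex.ext <;> simp [hc]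
    rw [this, Complex.norm_real, Real.norm_eq_abs, abs_of_neg (by linarith)]
    ring
  have hball : ∀ z ∈ Metric.ball c (5/2), 1/2 < z.re ∧ ‖z + 2‖ ≤ ‖c‖ + 5 := by
    intro z hz
    have hz : ‖z - c‖ < 5/2 := by simpa [dist_eq_norm] using hz
    constructor
    · have := (abs_le.1 (Complex.abs_re_le_norm (z - c))).1
      simp only [Complex.sub_re, hcre] at this
      linarith
    · have h1 := norm_sub_norm_le z c
      have h2 := norm_add_le z 2
      simp at h2
      linarith
  set δ := (s.re - 1/2)/2 with hδ
  have hδ0 : 0 < δ := by rw [hδ]; linarith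
  have hδ1 : δ < 5/2 := by rw [hδ]; linarith
  obtain ⟨K, hK, HK⟩ := bc_ball (5/2) δ hδ0 hδ1
  set U := Metric.ball c (5/2 - δ) with hU
  have hUB : U ⊆ Metric.ball c (5/2) := Metric.ball_subset_ball (by linarith)
  have hsU : s ∈ U := by
    rw [hU, Metric.mem_ball, dist_eq_norm, hsc, hδ]; linarith
  set Nn : ℕ → ℕ := fun m => ⌈Real.exp m⌉₊ with hNn
  have hNn' : ∀ m : ℕ, Real.exp m ≤ Nn m := fun m => Nat.le_ceil _
  set f : ℕ → ℂ → ℂ := fun m => PN χ (Nn m) m with hf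
  set M := C * Real.log (q * (‖c‖ + 5)) with hM
  have diffbd : ∀ m n : ℕ, 1 ≤ m → m ≤ n → ∀ z ∈ Metric.ball c (5/2), (f n z - f m z).re ≤ M / m := by
    intro m n hm hmn z hz
    obtain ⟨z1, z2⟩ := hball z hz
    have hm' : (1:ℝ) ≤ m := by exact_mod_cast hm
    have hmn' : (m:ℝ) ≤ n := by exact_mod_cast hmn
    have l2 := Real.log_two_lt_d9
    have := H q hq χ hprim hR m n (Nn n) z (by linarith) hmn' (hNn' n) z1
    have e : f m z = PN χ (Nn n) m z :=
      PN_indep χ _ _ _ (by linarith) (hNn' m) ((Real.exp_le_exp.2 hmn').trans (hNn' n)) z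
    rw [e, Complex.sub_re]
    refine this.trans ?_
    have hz0 : 0 < ‖z + 2‖ := by
      have := Complex.re_le_norm (z + 2)
      simp at this
      linarith
    rw [hM]
    gcongr
  have ctend := PN_limit χ Nn hNn' c (by rw [hcre]; norm_num)
  have ccau : CauchySeq (fun m => f m c) := ctend.cauchySeq
  have ucau : UniformCauchySeqOn f Filter.atTop U := by
    have key : ∀ ε > 0, ∃ N, ∀ m ≥ N, ∀ n ≥ m, ∀ x ∈ U, dist (f m x) (f n x) < ε := by
      intro ε hε
      set η := ε / (2 * K) with hη
      have hη0 : 0 < η := by positivity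
      obtain ⟨N1, hN1⟩ := Metric.cauchySeq_iff.1 ccau η hη0
      obtain ⟨N2, hN2⟩ := exists_nat_gt (M / η)
      refine ⟨max (max N1 N2) 1, ?_⟩
      intro m hm n hmn x hx
      have hm1 : N1 ≤ m := le_trans (le_max_left _ _) (le_trans (le_max_left _ _) hm)
      have hm2 : N2 ≤ m := le_trans (le_max_right _ _) (le_trans (le_max_left _ _) hm)
      have hm3 : 1 ≤ m := le_trans (le_max_right _ _) hm
      have hm' : (1:ℝ) ≤ m := by exact_mod_cast hm3
      have hMm : M / m ≤ η := by
        have : M / η ≤ m := hN2.le.trans (by exact_mod_cast hm2)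
        rw [div_le_iff₀ hη0] at this
        rw [div_le_iff₀ (by linarith)]
        linarith
      have hbc := (HK (fun z => ((1/η : ℝ) : ℂ) * (f n z - f m z)) c 1 le_rfl
        (((PN_diff χ _ _).sub (PN_diff χ _ _)).const_mul _).differentiableOn ?_ ?_ x ?_).1
      · rw [norm_mul, Complex.norm_real, Real.norm_of_nonneg (by positivity), mul_one] at hbc
        rw [dist_comm, dist_eq_norm]
        have : ‖f n x - f m x‖ ≤ K * η := by
          rw [one_div, inv_mul_le_iff₀ hη0] at hbc
          linarith
        have e : K * η = ε / 2 := by rw [hη]; field_simp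
        linarith
      · intro z hz
        rw [Complex.re_ofReal_mul, one_div, inv_mul_le_iff₀ hη0, mul_one]
        exact (diffbd m n hm3 hmn z hz).trans hMm
      · rw [norm_mul, Complex.norm_real, Real.norm_of_nonneg (by positivity), one_div, inv_mul_le_iff₀ hη0]
        have := hN1 n (hm1.trans hmn) m hm1
        rw [dist_eq_norm] at this
        linarith
      · have : dist x c < 5/2 - δ := hx
        rw [dist_eq_norm] at this
        exact this.le
    rw [Metric.uniformCauchySeqOn_iff]
    intro ε hε
    obtain ⟨N, hN⟩ := key ε hε
    refine ⟨N, fun m hm n hn x hx => ?_⟩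
    rcases le_total m n with h | h
    · exact hN m hm n h x hx
    · rw [dist_comm]; exact hN n hn m h x hx
  have hlim : ∀ x ∈ U, ∃ y, Filter.Tendsto (fun m => f m x) Filter.atTop (nhds y) :=
    fun x hx => cauchySeq_tendsto_of_complete (ucau.cauchySeq hx)
  classical
  set F : ℂ → ℂ := fun x => if hx : x ∈ U then (hlim x hx).choose else 0 with hF
  have hFt : ∀ x ∈ U, Filter.Tendsto (fun m => f m x) Filter.atTop (nhds (F x)) := by
    intro x hx
    simp only [hF, dif_pos hx]
    exact (hlim x hx).choose_spec
  have Fdiff : DifferentiableOn ℂ F U :=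
    (ucau.tendstoUniformlyOn_of_tendsto hFt).tendstoLocallyUniformlyOn.differentiableOn
      (Filter.Eventually.of_forall fun n => (PN_diff χ _ _).differentiableOn) Metric.isOpen_ball
  have dL : Differentiable ℂ (DirichletCharacter.LFunction χ) := DirichletCharacter.differentiable_LFunction hχ
  have hcU : c ∈ U := Metric.mem_ball_self (by linarith)
  have eqL : Set.EqOn (fun z => Complex.exp (F z)) (DirichletCharacter.LFunction χ) U := by
    refine AnalyticOnNhd.eqOn_of_preconnected_of_eventuallyEq (Fdiff.cexp.analyticOnNhd Metric.isOpen_ball)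
      (dL.differentiableOn.analyticOnNhd Metric.isOpen_ball)
      (convex_ball c _).isPreconnected hcU ?_
    have : {z : ℂ | 1 < z.re} ∈ nhds c :=
      (isOpen_lt continuous_const Complex.continuous_re).mem_nhds (by show 1 < c.re; rw [hcre]; norm_num)
    filter_upwards [this, Metric.isOpen_ball.mem_nhds hcU] with z hz hzU
    have : F z = LSeries (lf χ) z := tendsto_nhds_unique (hFt z hzU) (PN_limit χ Nn hNn' z hz)
    rw [this, exp_lf χ z hz]
  have e1 : Real.log ‖DirichletCharacter.LFunction χ s‖ = (F s).re := by
    rw [← eqL hsU]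
    simp only [Complex.norm_exp, Real.log_exp]
  rw [e1]
  have t1 : Filter.Tendsto (fun m => (f m s).re) Filter.atTop (nhds (F s).re) :=
    (Complex.continuous_re.tendsto _).comp (hFt s hsU)
  refine le_of_tendsto t1 ?_
  obtain ⟨m0, hm0⟩ := exists_nat_ge X
  filter_upwards [Filter.eventually_ge_atTop m0] with m hm
  have hXm : X ≤ m := hm0.trans (by exact_mod_cast hm)
  have := H q hq χ hprim hR X m (Nn m) s hX hXm (hNn' m) hs
  rw [PN_indep χ N (Nn m) X hX0 hN ((Real.exp_le_exp.2 hXm).trans (hNn' m)) s]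
  linarith

end Stmt5

open Complex Real Finset
namespace Stmt5

lemma conj_char {q : ℕ} [NeZero q] (χ : DirichletCharacter ℂ q) (v : ZMod q) (hv : IsUnit v) :
    (starRingEnd ℂ) (χ v) = χ v⁻¹ := by
  have h1 : χ v⁻¹ * χ v = 1 := by
    rw [← map_mul, ZMod.inv_mul_of_unit _ hv, map_one]
  have h2 : ‖χ v‖ = 1 := by
    obtain ⟨w, rfl⟩ := hv
    exact DirichletCharacter.unit_norm_eq_one χ w
  rw [← Complex.inv_eq_conj h2]
  exact (eq_inv_of_mul_eq_one_left h1).symm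

lemma ortho {q : ℕ} [NeZero q] {ι : Type*} (K : Finset ι) (c : ι → ℂ) (u : ι → ZMod q)
    (hu : Set.InjOn u K) :
    ∑ χ : DirichletCharacter ℂ q, ‖∑ k ∈ K, c k * χ (u k)‖ ^ 2 ≤ (Nat.totient q : ℝ) * ∑ k ∈ K, ‖c k‖ ^ 2 := by
  classical
  set K' := K.filter (fun k => IsUnit (u k)) with hK'
  have e1 : ∀ χ : DirichletCharacter ℂ q, ∑ k ∈ K, c k * χ (u k) = ∑ k ∈ K', c k * χ (u k) := by
    intro χ
    rw [hK', Finset.sum_filter]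
    refine Finset.sum_congr rfl fun k _ => ?_
    split_ifs with h
    · rfl
    · rw [χ.map_nonunit h, mul_zero]
  have e2 : ((∑ χ : DirichletCharacter ℂ q, ‖∑ k ∈ K, c k * χ (u k)‖ ^ 2 : ℝ) : ℂ) =
      (((Nat.totient q : ℝ) * ∑ k ∈ K', ‖c k‖ ^ 2 : ℝ) : ℂ) := by
    calc ((∑ χ : DirichletCharacter ℂ q, ‖∑ k ∈ K, c k * χ (u k)‖ ^ 2 : ℝ) : ℂ)
        = ∑ χ : DirichletCharacter ℂ q, ∑ k ∈ K', ∑ l ∈ K', (starRingEnd ℂ) (c k) * c l * (χ (u k)⁻¹ * χ (u l)) := by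
          push_cast
          refine Finset.sum_congr rfl fun χ _ => ?_
          rw [e1, ← Complex.conj_mul', map_sum, Finset.sum_mul_sum]
          refine Finset.sum_congr rfl fun k hk => Finset.sum_congr rfl fun l _ => ?_
          rw [map_mul, conj_char χ _ (Finset.mem_filter.1 hk).2]
          ring
      _ = ∑ k ∈ K', ∑ l ∈ K', (starRingEnd ℂ) (c k) * c l * ∑ χ : DirichletCharacter ℂ q, (χ (u k)⁻¹ * χ (u l)) := by
          rw [Finset.sum_comm]
          refine Finset.sum_congr rfl fun k _ => ?_
          rw [Finset.sum_comm]
          refine Finset.sum_congr rfl fun l _ => ?_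
          rw [Finset.mul_sum]
      _ = ∑ k ∈ K', (starRingEnd ℂ) (c k) * c k * (Nat.totient q : ℂ) := by
          refine Finset.sum_congr rfl fun k hk => ?_
          rw [Finset.sum_eq_single k]
          · rw [DirichletCharacter.sum_char_inv_mul_char_eq ℂ (Finset.mem_filter.1 hk).2, if_pos rfl]
          · intro l hl hlk
            rw [DirichletCharacter.sum_char_inv_mul_char_eq ℂ (Finset.mem_filter.1 hk).2, if_neg, mul_zero]
            intro h
            exact hlk (hu (Finset.mem_filter.1 hl).1 (Finset.mem_filter.1 hk).1 h.symm)
          · intro h; exact absurd hk h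
      _ = _ := by
          push_cast
          rw [Finset.mul_sum]
          refine Finset.sum_congr rfl fun k _ => ?_
          rw [Complex.conj_mul']
          ring
  have e3 := Complex.ofReal_injective e2
  rw [e3]
  gcongr
  exact Finset.filter_subset _ _

lemma multinomial_le {α : Type*} (s : Finset α) (f : α → ℕ) : Nat.multinomial s f ≤ (∑ i ∈ s, f i).factorial := by
  rw [← Nat.multinomial_spec]
  exact Nat.le_mul_of_pos_left _ (Finset.prod_pos fun i _ => Nat.factorial_pos _)

lemma prod_pow_inj (P : Finset ℕ) (hP : ∀ p ∈ P, p.Prime) (k : ℕ → ℕ) (p : ℕ) (hp : p ∈ P) :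
    (∏ p ∈ P, p ^ k p).factorization p = k p := by
  rw [Nat.factorization_prod (fun x hx => pow_ne_zero _ (hP x hx).ne_zero), Finsupp.finsetSum_apply,
    Finset.sum_eq_single p]
  · rw [Nat.factorization_pow, Finsupp.smul_apply, (hP p hp).factorization_self]; simp
  · intro b hb hbp
    rw [Nat.factorization_pow, Finsupp.smul_apply, (hP b hb).factorization, Finsupp.single_apply, if_neg hbp]; simp
  · intro h; exact absurd hp h

lemma moment {q : ℕ} [NeZero q] (P : Finset ℕ) (hP : ∀ p ∈ P, p.Prime) (b : ℕ → ℂ) (r : ℕ) (x : ℝ)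
    (hx : ∀ p ∈ P, (p:ℝ) ≤ x) (hxr : x ^ r ≤ q) :
    ∑ χ : DirichletCharacter ℂ q, ‖∑ p ∈ P, b p * χ (p : ZMod q)‖ ^ (2 * r) ≤
      (Nat.totient q : ℝ) * (r.factorial * (∑ p ∈ P, ‖b p‖ ^ 2) ^ r) := by
  have hle : ∀ k ∈ P.piAntidiag r, ∏ p ∈ P, p ^ k p ≤ q := by
    intro k hk
    have hk1 := (Finset.mem_piAntidiag.1 hk).1
    have : ((∏ p ∈ P, p ^ k p : ℕ) : ℝ) ≤ q := by
      push_cast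
      calc ∏ p ∈ P, (p:ℝ) ^ k p ≤ ∏ p ∈ P, x ^ k p := by
            apply Finset.prod_le_prod
            · intro p _; positivity
            · intro p hp
              exact pow_le_pow_left₀ (by positivity) (hx p hp) _
        _ = x ^ r := by rw [Finset.prod_pow_eq_pow_sum]; rw [hk1]
        _ ≤ q := hxr
    exact_mod_cast this
  have hpos : ∀ k : ℕ → ℕ, 1 ≤ ∏ p ∈ P, p ^ k p := fun k =>
    Finset.prod_pos fun p hp => pow_pos (hP p hp).pos _
  have hinj : Set.InjOn (fun k : ℕ → ℕ => ((∏ p ∈ P, p ^ k p : ℕ) : ZMod q)) (P.piAntidiag r) := by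
    intro k hk l hl h
    have h1 := (ZMod.natCast_eq_natCast_iff _ _ _).1 h
    have k1 := hle k hk
    have k2 := hpos k
    have l1 := hle l hl
    have l2 := hpos l
    have heq : ∏ p ∈ P, p ^ k p = ∏ p ∈ P, p ^ l p := by
      have hd := Nat.modEq_iff_dvd.1 h1
      obtain ⟨z, hz⟩ := hd
      have hq : 0 < q := Nat.pos_of_ne_zero (NeZero.ne q)
      have hz0 : z = 0 := by
        by_contra hne
        have : 1 ≤ |z| := Int.one_le_abs hne
        have h3 : |(((∏ p ∈ P, p ^ l p : ℕ) : ℤ) - ((∏ p ∈ P, p ^ k p : ℕ) : ℤ))| < q := by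
          rw [abs_lt]; omega
        rw [hz, abs_mul] at h3
        have h4 : |(q:ℤ)| = q := abs_of_nonneg (by positivity)
        rw [h4] at h3
        nlinarith
      rw [hz0] at hz
      omega
    ext p
    by_cases hp : p ∈ P
    · rw [← prod_pow_inj P hP k p hp, heq, prod_pow_inj P hP l p hp]
    · have a1 : k p = 0 := by
        by_contra h
        exact hp ((Finset.mem_piAntidiag.1 hk).2 p h)
      have a2 : l p = 0 := by
        by_contra h
        exact hp ((Finset.mem_piAntidiag.1 hl).2 p h)
      rw [a1, a2]
  have h := ortho (P.piAntidiag r) (fun k => (Nat.multinomial P k : ℂ) * ∏ p ∈ P, b p ^ k p)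
    (fun k : ℕ → ℕ => ((∏ p ∈ P, p ^ k p : ℕ) : ZMod q)) hinj
  have e : ∀ χ : DirichletCharacter ℂ q, ‖∑ p ∈ P, b p * χ (p : ZMod q)‖ ^ (2 * r) =
      ‖∑ k ∈ P.piAntidiag r, (Nat.multinomial P k : ℂ) * (∏ p ∈ P, b p ^ k p) * χ ((∏ p ∈ P, p ^ k p : ℕ) : ZMod q)‖ ^ 2 := by
    intro χ
    rw [mul_comm 2 r, pow_mul, ← norm_pow, Finset.sum_pow_eq_sum_piAntidiag]
    congr 2
    refine Finset.sum_congr rfl fun k _ => ?_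
    rw [mul_assoc]
    congr 1
    push_cast
    rw [map_prod, ← Finset.prod_mul_distrib]
    refine Finset.prod_congr rfl fun p _ => ?_
    rw [map_pow, mul_pow]
  simp_rw [e]
  refine h.trans ?_
  gcongr
  rw [Finset.sum_pow_eq_sum_piAntidiag, Finset.mul_sum]
  refine Finset.sum_le_sum fun k hk => ?_
  have hm : (Nat.multinomial P k : ℝ) ≤ r.factorial := by
    have := multinomial_le P k
    rw [(Finset.mem_piAntidiag.1 hk).1] at this
    exact_mod_cast this
  rw [norm_mul, mul_pow, Complex.norm_natCast, norm_prod, ← Finset.prod_pow]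
  have e5 : ∏ p ∈ P, ‖b p ^ k p‖ ^ 2 = ∏ p ∈ P, (‖b p‖ ^ 2) ^ k p := by
    refine Finset.prod_congr rfl fun p _ => ?_
    rw [norm_pow, ← pow_mul, ← pow_mul, mul_comm]
  rw [e5, sq, mul_assoc]
  have : 0 ≤ ∏ p ∈ P, (‖b p‖ ^ 2) ^ k p := Finset.prod_nonneg fun p _ => by positivity
  gcongr

end Stmt5

open Complex Real Finset
namespace Stmt5

lemma zeta_re_le (s : ℝ) (hs : 1 < s) : 0 < (riemannZeta s).re ∧ (riemannZeta s).re ≤ 1 + 1 / (s - 1) := by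
  refine ⟨riemannZeta_re_pos_of_one_lt hs, ?_⟩
  have h1 : riemannZeta s = ((∑' n : ℕ, 1 / ((n:ℝ) + 1) ^ s : ℝ) : ℂ) := by
    rw [zeta_eq_tsum_one_div_nat_add_one_cpow (by simpa using hs), Complex.ofReal_tsum]
    refine tsum_congr fun n => ?_
    push_cast
    rw [Complex.ofReal_cpow (by positivity)]
    push_cast
    rfl
  rw [h1, Complex.ofReal_re]
  have h2 := ZetaAsymptotics.zeta_limit_aux1 hs
  have h3 : 0 ≤ ZetaAsymptotics.termTSum s := tsum_nonneg fun n => ZetaAsymptotics.term_nonneg _ _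
  nlinarith

lemma prime_sum_zeta (P : Finset ℕ) (hP : ∀ p ∈ P, p.Prime) (δ : ℝ) (hδ : 0 < δ) :
    ∑ p ∈ P, (p:ℝ) ^ (-(1 + δ)) ≤ Real.log (1 + 1 / δ) := by
  have hs : 1 < 1 + δ := by linarith
  have h1 := log_riemannZeta_eq hs
  obtain ⟨h2, h3⟩ := zeta_re_le (1 + δ) hs
  rw [show 1 + δ - 1 = δ by ring] at h3
  have hsum : Summable (fun n : ℕ => ArithmeticFunction.vonMangoldt n / ((n:ℝ) ^ (1 + δ) * Real.log n)) := by
    have := (lf_summable (1 : DirichletCharacter ℂ 1) ((1 + δ : ℝ) : ℂ) (by simpa using hδ)).norm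
    refine this.congr fun n => ?_
    rcases eq_or_ne n 0 with rfl | hn
    · simp
    rw [LSeries.term_of_ne_zero hn, lf, norm_div, norm_div, norm_mul, Complex.norm_real, Complex.norm_real,
      Real.norm_of_nonneg (ArithmeticFunction.vonMangoldt_nonneg), Real.norm_of_nonneg (Real.log_natCast_nonneg n),
      Complex.norm_natCast_cpow_of_pos (Nat.pos_of_ne_zero hn), Complex.ofReal_re, MulChar.one_apply (isUnit_of_subsingleton _),
      norm_one, one_mul, div_div, mul_comm (Real.log n)]
  calc ∑ p ∈ P, (p:ℝ) ^ (-(1 + δ)) = ∑ p ∈ P, ArithmeticFunction.vonMangoldt p / ((p:ℝ) ^ (1 + δ) * Real.log p) := by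
        refine Finset.sum_congr rfl fun p hp => ?_
        have hpp := hP p hp
        rw [ArithmeticFunction.vonMangoldt_apply_prime hpp, Real.rpow_neg (by positivity)]
        have : 0 < Real.log p := Real.log_pos (by exact_mod_cast hpp.one_lt)
        have : 0 < (p:ℝ) ^ (1+δ) := Real.rpow_pos_of_pos (by exact_mod_cast hpp.pos) _
        field_simp
    _ ≤ ∑' n : ℕ, ArithmeticFunction.vonMangoldt n / ((n:ℝ) ^ (1 + δ) * Real.log n) := by
        apply hsum.sum_le_tsum
        intro n _
        have := ArithmeticFunction.vonMangoldt_nonneg (n := n)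
        have := Real.log_natCast_nonneg n
        positivity
    _ = Real.log (riemannZeta ((1 + δ : ℝ) : ℂ)).re := h1.symm
    _ ≤ _ := Real.log_le_log h2 h3

lemma pow_nine (L : ℝ) (hL : 1.098 ≤ L) : 1 + L ≤ L ^ 9 := by
  have h1 : (1.098:ℝ) ^ 8 ≤ L ^ 8 := pow_le_pow_left₀ (by norm_num) hL 8
  have h2 : (2:ℝ) ≤ 1.098 ^ 8 := by norm_num
  have : L ^ 9 = L * L ^ 8 := by ring
  nlinarith

lemma log_q_ge (q : ℕ) (hq : 3 ≤ q) : 1.098 ≤ Real.log q := by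
  have h1 := Real.log_three_gt_d9
  have h2 : Real.log 3 ≤ Real.log q := Real.log_le_log (by norm_num) (by exact_mod_cast hq)
  norm_num at h1 ⊢
  linarith

lemma M_ge (q : ℕ) (hq : 3 ≤ q) (y : ℝ) (hy : 2 ≤ y) : 1.098 ≤ min (Real.log y + 1) (Real.log q) := by
  apply le_min
  · have h1 := Real.log_two_gt_d9
    have h2 : Real.log 2 ≤ Real.log y := Real.log_le_log (by norm_num) hy
    norm_num at h1 ⊢
    linarith
  · exact log_q_ge q hq

lemma prime_sum_bound (q : ℕ) (hq : 3 ≤ q) (y : ℝ) (hy : 2 ≤ y) (P : Finset ℕ) (hP : ∀ p ∈ P, p.Prime)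
    (hPq : ∀ p ∈ P, p ≤ q) :
    ∑ p ∈ P, (p:ℝ) ^ (-(1 + 2 / Real.log y)) ≤ 25 * Real.log (min (Real.log y + 1) (Real.log q)) := by
  have hly : 0 < Real.log y := Real.log_pos (by linarith)
  have hlq := log_q_ge q hq
  have hlq0 : 0 < Real.log q := by norm_num at hlq; linarith
  rcases min_choice (Real.log y + 1) (Real.log q) with h | h <;> rw [h]
  · have h1 := prime_sum_zeta P hP (2 / Real.log y) (by positivity)
    have h2 : Real.log (1 + 1 / (2 / Real.log y)) ≤ Real.log (Real.log y + 1) := by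
      apply Real.log_le_log (by positivity)
      rw [one_div_div]
      linarith
    have h3 : 0 ≤ Real.log (Real.log y + 1) := Real.log_nonneg (by linarith)
    linarith
  · have h1 := prime_sum_zeta P hP (1 / Real.log q) (by positivity)
    have h2 : Real.log (1 + 1 / (1 / Real.log q)) ≤ 9 * Real.log (Real.log q) := by
      have : 9 * Real.log (Real.log q) = Real.log ((Real.log q) ^ 9) := by
        rw [Real.log_pow]; norm_num
      rw [this]
      apply Real.log_le_log (by positivity)
      rw [one_div_one_div]
      exact pow_nine _ hlq
    have h3 : ∑ p ∈ P, (p:ℝ) ^ (-(1 + 2 / Real.log y)) ≤ Real.exp 1 * ∑ p ∈ P, (p:ℝ) ^ (-(1 + 1 / Real.log q)) := by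
      rw [Finset.mul_sum]
      refine Finset.sum_le_sum fun p hp => ?_
      have hp1 : (1:ℝ) ≤ p := by exact_mod_cast (hP p hp).one_le
      have hp0 : (0:ℝ) < p := by linarith
      calc (p:ℝ) ^ (-(1 + 2 / Real.log y)) ≤ (p:ℝ) ^ (-1:ℝ) := by
            apply Real.rpow_le_rpow_of_exponent_le hp1
            have : 0 < 2 / Real.log y := by positivity
            linarith
        _ = (p:ℝ) ^ (1 / Real.log q) * (p:ℝ) ^ (-(1 + 1 / Real.log q)) := by
            rw [← Real.rpow_add hp0]; congr 1; ring
        _ ≤ _ := by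
            gcongr
            rw [Real.rpow_def_of_pos hp0]
            apply Real.exp_le_exp.2
            rw [mul_one_div, div_le_one hlq0]
            exact Real.log_le_log hp0 (by exact_mod_cast hPq p hp)
    have h4 := Real.exp_one_lt_d9
    have h5 : 0 ≤ Real.log (Real.log q) := Real.log_nonneg (by norm_num at hlq; linarith)
    have h6 : Real.exp 1 * ∑ p ∈ P, (p:ℝ) ^ (-(1 + 1 / Real.log q)) ≤ Real.exp 1 * (9 * Real.log (Real.log q)) := by
      gcongr
      exact h1.trans h2
    nlinarith

/-- primes below `N` -/
noncomputable def pr (N : ℕ) : Finset ℕ := (Finset.range N).filter Nat.Prime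

lemma term_norm {q : ℕ} [NeZero q] (χ : DirichletCharacter ℂ q) (s : ℂ) (p k : ℕ) (hp : p.Prime) (hk : 2 ≤ k) :
    ‖LSeries.term (lf χ) s (p ^ k)‖ ≤ 1/2 * ((p:ℝ) ^ (-s.re)) ^ k := by
  have hp0 : (0:ℝ) < p := by exact_mod_cast hp.pos
  have hn : p ^ k ≠ 0 := pow_ne_zero _ hp.ne_zero
  have hlp : 0 < Real.log p := Real.log_pos (by exact_mod_cast hp.one_lt)
  rw [LSeries.term_of_ne_zero hn, lf, norm_div, norm_div, norm_mul, Complex.norm_real, Complex.norm_real,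
    Complex.norm_natCast_cpow_of_pos (Nat.pos_of_ne_zero hn), ArithmeticFunction.vonMangoldt_apply_pow (by omega),
    ArithmeticFunction.vonMangoldt_apply_prime hp]
  push_cast
  rw [Real.log_pow, Real.norm_of_nonneg hlp.le, Real.norm_of_nonneg (by positivity), ← Real.rpow_natCast,
    ← Real.rpow_mul hp0.le, mul_comm _ s.re, Real.rpow_mul hp0.le, Real.rpow_natCast, Real.rpow_neg hp0.le, inv_pow, ← div_eq_mul_inv]
  refine div_le_div_of_nonneg_right ?_ (by positivity)
  have h1 : ‖χ ((p:ZMod q) ^ k)‖ ≤ 1 := DirichletCharacter.norm_le_one χ _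
  have hk' : (2:ℝ) ≤ k := by exact_mod_cast hk
  rw [div_le_iff₀ (by positivity)]
  nlinarith [mul_le_mul_of_nonneg_right h1 hlp.le, mul_le_mul_of_nonneg_right hk' hlp.le]

lemma PN_split {q : ℕ} [NeZero q] (χ : DirichletCharacter ℂ q) (N : ℕ) (X : ℝ) (hX : 0 < X) (s : ℂ) (hs : 1/2 ≤ s.re) :
    (PN χ N X s).re ≤ ‖∑ p ∈ pr N, ((wt X p : ℂ) * (p:ℂ) ^ (-s)) * χ (p : ZMod q)‖ +
      2 * ∑ p ∈ pr N, (p:ℝ) ^ (-(2 * s.re)) := by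
  have h1 : PN χ N X s = ∑ p ∈ pr N, ((wt X p : ℂ) * (p:ℂ) ^ (-s)) * χ (p : ZMod q) +
      ∑ n ∈ (Finset.range N).filter (fun n => ¬ n.Prime), LSeries.term (lf χ) s n * (wt X n : ℂ) := by
    rw [PN, pr, ← Finset.sum_filter_add_sum_filter_not (Finset.range N) Nat.Prime]
    congr 1
    refine Finset.sum_congr rfl fun p hp => ?_
    have hp := (Finset.mem_filter.1 hp).2
    have hlp : ((Real.log p : ℝ) : ℂ) ≠ 0 := by
      exact_mod_cast (Real.log_pos (by exact_mod_cast hp.one_lt)).ne'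
    rw [LSeries.term_of_ne_zero hp.ne_zero, lf, ArithmeticFunction.vonMangoldt_apply_prime hp,
      mul_div_assoc, div_self hlp, mul_one, Complex.cpow_neg]
    ring
  have h2 : ‖∑ n ∈ (Finset.range N).filter (fun n => ¬ n.Prime), LSeries.term (lf χ) s n * (wt X n : ℂ)‖ ≤
      2 * ∑ p ∈ pr N, (p:ℝ) ^ (-(2 * s.re)) := by
    set T := (Finset.range N).filter (fun n => ¬ n.Prime) with hT
    set Z := (pr N ×ˢ Finset.range N).image (fun a : ℕ × ℕ => a.1 ^ (a.2 + 2)) with hZ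
    calc _ ≤ ∑ n ∈ T, ‖LSeries.term (lf χ) s n‖ := by
          refine (norm_sum_le _ _).trans (Finset.sum_le_sum fun n _ => ?_)
          rw [norm_mul, Complex.norm_real, Real.norm_of_nonneg (wt_nonneg _ _)]
          exact mul_le_of_le_one_right (norm_nonneg _) (wt_le_one X hX n)
      _ = ∑ n ∈ T.filter (fun n => LSeries.term (lf χ) s n ≠ 0), ‖LSeries.term (lf χ) s n‖ := by
          symm
          apply Finset.sum_filter_of_ne
          intro n _ h h0
          exact h (by rw [h0, norm_zero])
      _ ≤ ∑ n ∈ Z, ‖LSeries.term (lf χ) s n‖ := by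
          apply Finset.sum_le_sum_of_subset_of_nonneg
          · intro n hn
            obtain ⟨hn1, hn2⟩ := Finset.mem_filter.1 hn
            obtain ⟨hn3, hn4⟩ := Finset.mem_filter.1 hn1
            have hpp : IsPrimePow n := by
              by_contra h
              apply hn2
              have : lf χ n = 0 := by simp [lf, ArithmeticFunction.vonMangoldt_eq_zero_iff.2 h]
              simp [LSeries.term, this]
            obtain ⟨p, k, hp, hk, rfl⟩ := (isPrimePow_nat_iff n).1 hpp
            have hk2 : 2 ≤ k := by
              by_contra h
              have : k = 1 := by omega
              subst this
              simp [hp] at hn4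
            have hlt := Finset.mem_range.1 hn3
            have a1 : p ≤ p ^ k := Nat.le_self_pow (by omega) p
            have a2 : k < p ^ k := Nat.lt_pow_self hp.one_lt
            rw [hZ, Finset.mem_image]
            refine ⟨(p, k - 2), ?_, ?_⟩
            · rw [Finset.mem_product, pr, Finset.mem_filter, Finset.mem_range, Finset.mem_range]
              refine ⟨⟨by omega, hp⟩, ?_⟩
              show k - 2 < N
              omega
            · show p ^ (k - 2 + 2) = p ^ k
              congr 1
              omega
          · intro n _ _
            exact norm_nonneg _
      _ ≤ ∑ a ∈ pr N ×ˢ Finset.range N, ‖LSeries.term (lf χ) s (a.1 ^ (a.2 + 2))‖ := by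
          apply Finset.sum_image_le_of_nonneg
          intro u _
          exact norm_nonneg _
      _ ≤ ∑ p ∈ pr N, ∑ k ∈ Finset.range N, 1/2 * ((p:ℝ) ^ (-s.re)) ^ (k + 2) := by
          rw [Finset.sum_product]
          refine Finset.sum_le_sum fun p hp => Finset.sum_le_sum fun k _ => ?_
          exact term_norm χ s p (k+2) (Finset.mem_filter.1 hp).2 (by omega)
      _ ≤ ∑ p ∈ pr N, 2 * (p:ℝ) ^ (-(2 * s.re)) := by
          refine Finset.sum_le_sum fun p hp => ?_
          have hp := (Finset.mem_filter.1 hp).2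
          have hp0 : (0:ℝ) < p := by exact_mod_cast hp.pos
          have hp2 : (2:ℝ) ≤ p := by exact_mod_cast hp.two_le
          set ρ := (p:ℝ) ^ (-s.re) with hρ
          have ρ0 : 0 < ρ := Real.rpow_pos_of_pos hp0 _
          have ρ1 : ρ ≤ 3/4 := by
            have b1 : ρ ≤ (p:ℝ) ^ (-(1/2):ℝ) := Real.rpow_le_rpow_of_exponent_le (by linarith) (by linarith)
            have b2 : (p:ℝ) ^ (-(1/2):ℝ) ≤ (2:ℝ) ^ (-(1/2):ℝ) :=
              Real.rpow_le_rpow_of_nonpos (by norm_num) hp2 (by norm_num)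
            have b3 : ((2:ℝ) ^ (-(1/2):ℝ)) ^ 2 = 1/2 := by
              rw [← Real.rpow_natCast, ← Real.rpow_mul (by norm_num)]
              norm_num
            have b4 : 0 < (2:ℝ) ^ (-(1/2):ℝ) := by positivity
            nlinarith
          have e : (p:ℝ) ^ (-(2 * s.re)) = ρ ^ 2 := by
            rw [hρ, ← Real.rpow_natCast, ← Real.rpow_mul hp0.le]
            congr 1; push_cast; ring
          rw [e]
          have g : ∑ k ∈ Finset.range N, ρ ^ k ≤ 4 := by
            have h := geom_sum_mul ρ N
            have : 0 ≤ ρ ^ N := by positivity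
            have h0 : 0 ≤ ∑ k ∈ Finset.range N, ρ ^ k := Finset.sum_nonneg fun k _ => by positivity
            nlinarith
          calc _ = 1/2 * ρ ^ 2 * ∑ k ∈ Finset.range N, ρ ^ k := by
                rw [Finset.mul_sum]
                refine Finset.sum_congr rfl fun k _ => ?_
                ring
            _ ≤ 1/2 * ρ ^ 2 * 4 := by gcongr
            _ = _ := by ring
      _ = _ := by rw [Finset.mul_sum]
  rw [h1, Complex.add_re]
  have := Complex.re_le_norm (∑ p ∈ pr N, ((wt X p : ℂ) * (p:ℂ) ^ (-s)) * χ (p : ZMod q))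
  have := Complex.re_le_norm (∑ n ∈ (Finset.range N).filter (fun n => ¬ n.Prime), LSeries.term (lf χ) s n * (wt X n : ℂ))
  linarith

end Stmt5

open Complex Real Finset
namespace Stmt5

lemma layer {ι : Type*} (G : Finset ι) (u : ι → ℝ) (κ V0 Φ : ℝ) (hκ : 0 < κ) (hV0 : 0 ≤ V0)
    (hcard : (G.card : ℝ) ≤ Φ)
    (htail : ∀ V, V0 ≤ V → ((G.filter (fun i => V < u i)).card : ℝ) ≤ Φ * Real.exp (-((κ + 1) * V))) :
    ∑ i ∈ G, Real.exp (κ * u i) ≤ 3 * Φ * Real.exp (κ * (V0 + 1)) := by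
  have hΦ : 0 ≤ Φ := le_trans (by positivity) hcard
  set J := ⌈∑ i ∈ G, |u i|⌉₊ with hJ
  have hpt : ∀ i ∈ G, Real.exp (κ * u i) ≤ Real.exp (κ * V0) +
      ∑ j ∈ Finset.range J, if V0 + j < u i then Real.exp (κ * (V0 + j + 1)) else 0 := by
    intro i hi
    have hs : 0 ≤ ∑ j ∈ Finset.range J, if V0 + j < u i then Real.exp (κ * (V0 + j + 1)) else 0 :=
      Finset.sum_nonneg fun j _ => by split_ifs <;> positivity
    rcases le_or_gt (u i) V0 with h | h
    · have : Real.exp (κ * u i) ≤ Real.exp (κ * V0) := by gcongr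
      linarith
    · have hd : 0 < u i - V0 := by linarith
      have h1 : 0 < ⌈u i - V0⌉₊ := Nat.ceil_pos.2 hd
      obtain ⟨j, hj⟩ : ∃ j, ⌈u i - V0⌉₊ = j + 1 := ⟨⌈u i - V0⌉₊ - 1, by omega⟩
      have hj1 : u i - V0 ≤ j + 1 := by
        have := Nat.le_ceil (u i - V0)
        rw [hj] at this
        exact_mod_cast this
      have hj2 : (j:ℝ) < u i - V0 := by
        rw [← Nat.lt_ceil, hj]; omega
      have hjJ : j ∈ Finset.range J := by
        rw [Finset.mem_range, hJ, Nat.lt_ceil]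
        have a1 : |u i| ≤ ∑ i ∈ G, |u i| := Finset.single_le_sum (f := fun i => |u i|) (fun i _ => abs_nonneg _) hi
        have a2 := le_abs_self (u i)
        linarith
      have h2 := Finset.single_le_sum (f := fun j : ℕ => if V0 + j < u i then Real.exp (κ * (V0 + j + 1)) else 0)
        (fun j _ => by split_ifs <;> positivity) hjJ
      rw [if_pos (by linarith)] at h2
      have h3 : Real.exp (κ * u i) ≤ Real.exp (κ * (V0 + j + 1)) := by
        gcongr; linarith
      have := Real.exp_pos (κ * V0)
      linarith
  have hgeo : ∑ j ∈ Finset.range J, Real.exp (-1) ^ j ≤ 2 := by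
    have he : Real.exp (-1) ≤ 1/2 := by
      rw [Real.exp_neg, inv_le_comm₀ (Real.exp_pos 1) (by norm_num)]
      have := Real.exp_one_gt_d9
      norm_num at this ⊢
      linarith
    have h := geom_sum_mul (Real.exp (-1)) J
    have h0 : 0 ≤ ∑ j ∈ Finset.range J, Real.exp (-1) ^ j := Finset.sum_nonneg fun k _ => by positivity
    have : 0 ≤ Real.exp (-1) ^ J := by positivity
    nlinarith
  calc ∑ i ∈ G, Real.exp (κ * u i) ≤ ∑ i ∈ G, (Real.exp (κ * V0) +
      ∑ j ∈ Finset.range J, if V0 + j < u i then Real.exp (κ * (V0 + j + 1)) else 0) := Finset.sum_le_sum hpt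
    _ = G.card * Real.exp (κ * V0) + ∑ j ∈ Finset.range J, ((G.filter (fun i => V0 + j < u i)).card : ℝ) * Real.exp (κ * (V0 + j + 1)) := by
      rw [Finset.sum_add_distrib, Finset.sum_const, nsmul_eq_mul, Finset.sum_comm]
      congr 1
      refine Finset.sum_congr rfl fun j _ => ?_
      rw [← Finset.sum_filter, Finset.sum_const, nsmul_eq_mul]
    _ ≤ Φ * Real.exp (κ * (V0 + 1)) + ∑ j ∈ Finset.range J, Φ * Real.exp (κ * (V0 + 1)) * Real.exp (-1) ^ j := by
      apply add_le_add
      · apply mul_le_mul hcard _ (by positivity) hΦ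
        gcongr; linarith
      · refine Finset.sum_le_sum fun j _ => ?_
        calc _ ≤ Φ * Real.exp (-((κ + 1) * (V0 + j))) * Real.exp (κ * (V0 + j + 1)) := by
              gcongr
              have : (0:ℝ) ≤ j := by positivity
              exact htail _ (by linarith)
          _ = Φ * Real.exp (κ - V0 - j) := by
              rw [mul_assoc, ← Real.exp_add]; congr 2; ring
          _ ≤ Φ * (Real.exp (κ * (V0 + 1)) * Real.exp (-1) ^ j) := by
              rw [← Real.exp_nat_mul, ← Real.exp_add]
              gcongr
              nlinarith
          _ = _ := by ring
    _ = Φ * Real.exp (κ * (V0 + 1)) * (1 + ∑ j ∈ Finset.range J, Real.exp (-1) ^ j) := by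
      rw [← Finset.mul_sum]; ring
    _ ≤ Φ * Real.exp (κ * (V0 + 1)) * 3 := by
      gcongr; linarith
    _ = _ := by ring

/-- the point of evaluation -/
noncomputable def pt (y t : ℝ) : ℂ := 1 / 2 + 1 / Real.log y + t * Complex.I

lemma pt_re (y t : ℝ) : (pt y t).re = 1/2 + 1 / Real.log y := by
  have : pt y t = ((1/2 + 1 / Real.log y : ℝ) : ℂ) + t * Complex.I := by
    unfold pt; push_cast; ring
  rw [this]; simp

lemma pt_im (y t : ℝ) : (pt y t).im = t := by
  have : pt y t = ((1/2 + 1 / Real.log y : ℝ) : ℂ) + t * Complex.I := by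
    unfold pt; push_cast; ring
  rw [this]; simp

lemma pt_re_bounds (y t : ℝ) (hy : 2 ≤ y) : 1/2 < (pt y t).re ∧ (pt y t).re ≤ 2 := by
  rw [pt_re]
  have h1 := Real.log_two_gt_d9
  have h2 : Real.log 2 ≤ Real.log y := Real.log_le_log (by norm_num) hy
  have h3 : 0 < Real.log y := by norm_num at h1; linarith
  constructor
  · have : 0 < 1 / Real.log y := by positivity
    linarith
  · have : 1 / Real.log y ≤ 3/2 := by
      rw [div_le_iff₀ h3]; norm_num at h1; linarith
    linarith

lemma conductor_bound (A : ℝ) (hA : 0 < A) (q : ℕ) (hq : 3 ≤ q) (y t : ℝ) (hy : 2 ≤ y) (ht : |t| ≤ (q:ℝ) ^ A) :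
    Real.log (q * ‖pt y t + 2‖) ≤ (A + 3) * Real.log q := by
  have hq3 : (3:ℝ) ≤ q := by exact_mod_cast hq
  have hq0 : (0:ℝ) < q := by linarith
  have h1 : ‖pt y t + 2‖ ≤ 4 + |t| := by
    refine (Complex.norm_le_abs_re_add_abs_im _).trans ?_
    obtain ⟨a, b⟩ := pt_re_bounds y t hy
    rw [Complex.add_re, Complex.add_im, pt_im]
    simp
    rw [abs_of_pos (by linarith)]
    linarith
  have h1' : 0 < ‖pt y t + 2‖ := by
    obtain ⟨a, b⟩ := pt_re_bounds y t hy
    have := Complex.re_le_norm (pt y t + 2)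
    simp at this
    linarith
  have hqA : 1 ≤ (q:ℝ) ^ A := Real.one_le_rpow (by linarith) hA.le
  have h2 : ‖pt y t + 2‖ ≤ (q:ℝ) ^ A * (q:ℝ) ^ 2 := by
    have h9 : (9:ℝ) ≤ (q:ℝ) ^ 2 := by nlinarith
    have h10 := mul_le_mul_of_nonneg_left h9 (by linarith : 0 ≤ (q:ℝ) ^ A)
    linarith
  calc Real.log (q * ‖pt y t + 2‖) ≤ Real.log (q * ((q:ℝ) ^ A * (q:ℝ) ^ 2)) :=
        Real.log_le_log (by positivity) (by gcongr)
    _ = _ := by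
      rw [Real.log_mul hq0.ne' (by positivity), Real.log_mul (by positivity) (by positivity), Real.log_rpow hq0, Real.log_pow]
      push_cast; ring

noncomputable def Sx {q : ℕ} [NeZero q] (χ : DirichletCharacter ℂ q) (X : ℝ) (s : ℂ) : ℂ :=
  ∑ p ∈ pr ⌈Real.exp X⌉₊, ((wt X p : ℂ) * (p:ℂ) ^ (-s)) * χ (p : ZMod q)

lemma pr_prime (N : ℕ) : ∀ p ∈ pr N, p.Prime := fun _ hp => (Finset.mem_filter.1 hp).2

lemma pr_le (X : ℝ) : ∀ p ∈ pr ⌈Real.exp X⌉₊, (p:ℝ) ≤ Real.exp X := fun _ hp =>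
  (Nat.lt_ceil.1 (Finset.mem_range.1 (Finset.mem_filter.1 hp).1)).le

lemma u_bound (A : ℝ) (hA : 0 < A) : ∃ C : ℝ, 1 ≤ C ∧ ∀ (q : ℕ) [NeZero q], 3 ≤ q → ∀ χ : DirichletCharacter ℂ q, χ.IsPrimitive →
    dirichletRH χ → ∀ y t : ℝ, 2 ≤ y → |t| ≤ (q:ℝ) ^ A →
    (∀ X : ℝ, Real.log 2 ≤ X → X ≤ Real.log q → Real.log ‖DirichletCharacter.LFunction χ (pt y t)‖ ≤
      ‖Sx χ X (pt y t)‖ + 50 * Real.log (min (Real.log y + 1) (Real.log q)) + C * Real.log q / X) ∧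
    Real.log ‖DirichletCharacter.LFunction χ (pt y t)‖ ≤ C * Real.log q / Real.log 2 := by
  obtain ⟨C, hC, H⟩ := key_ineq
  refine ⟨C * (A + 3), by nlinarith, ?_⟩
  intro q _ hq χ hprim hR y t hy ht
  obtain ⟨s1, s2⟩ := pt_re_bounds y t hy
  have hcond := conductor_bound A hA q hq y t hy ht
  have l2 : 0 < Real.log 2 := Real.log_pos (by norm_num)
  have hq0 : (0:ℝ) < q := by
    have : 0 < q := by omega
    exact_mod_cast this
  have base : ∀ X : ℝ, Real.log 2 ≤ X → Real.log ‖DirichletCharacter.LFunction χ (pt y t)‖ ≤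
      ‖Sx χ X (pt y t)‖ + 2 * ∑ p ∈ pr ⌈Real.exp X⌉₊, (p:ℝ) ^ (-(2 * (pt y t).re)) + C * (A + 3) * Real.log q / X := by
    intro X hX
    have hX0 : 0 < X := by linarith
    have h1 := H q (by omega) χ hprim hR X ⌈Real.exp X⌉₊ (pt y t) hX (Nat.le_ceil _) s1 s2
    have h2 := PN_split χ ⌈Real.exp X⌉₊ X hX0 (pt y t) s1.le
    have h3 : C * Real.log (q * ‖pt y t + 2‖) / X ≤ C * (A + 3) * Real.log q / X := by
      rw [mul_assoc C]
      gcongr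
    unfold Sx
    linarith
  constructor
  · intro X hX hXq
    have h1 := base X hX
    have h2 := prime_sum_bound q hq y hy (pr ⌈Real.exp X⌉₊) (pr_prime _) (fun p hp => by
      have h3 := pr_le X p hp
      have h4 : Real.exp X ≤ q := by rw [← Real.exp_log hq0]; exact Real.exp_le_exp.2 hXq
      exact_mod_cast h3.trans h4)
    have e : 2 * (pt y t).re = 1 + 2 / Real.log y := by rw [pt_re]; ring
    rw [e] at h1
    linarith
  · have h1 := base (Real.log 2) le_rfl
    have e : pr ⌈Real.exp (Real.log 2)⌉₊ = ∅ := by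
      rw [Real.exp_log (by norm_num)]
      have : ⌈(2:ℝ)⌉₊ = 2 := by
        have := Nat.ceil_natCast (R := ℝ) 2
        exact_mod_cast this
      rw [this]
      decide
    rw [Sx, e] at h1
    simpa using h1

lemma tail (A : ℝ) (hA : 0 < A) : ∃ C : ℝ, 1 ≤ C ∧ ∀ κ : ℝ, 0 < κ → ∀ (q : ℕ) [NeZero q], 3 ≤ q →
    (∀ χ : DirichletCharacter ℂ q, dirichletRH χ) → ∀ y t : ℝ, 2 ≤ y → |t| ≤ (q:ℝ) ^ A →
    ∀ G : Finset (DirichletCharacter ℂ q), (∀ χ ∈ G, χ.IsPrimitive) →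
    ∀ V : ℝ, 25 * Real.exp (8 * C * (κ + 1)) * Real.log (min (Real.log y + 1) (Real.log q)) + 8 * C ≤ V →
    ((G.filter (fun χ => V < Real.log ‖DirichletCharacter.LFunction χ (pt y t)‖)).card : ℝ) ≤
      Nat.totient q * Real.exp (-((κ + 1) * V)) := by
  obtain ⟨C, hC, H⟩ := u_bound A hA
  refine ⟨C, hC, ?_⟩
  intro κ hκ q _ hq hR y t hy ht G hG V hV
  set M := min (Real.log y + 1) (Real.log q) with hM
  have hM1 := M_ge q hq y hy
  rw [← hM] at hM1
  set W := Real.log M with hW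
  have hW0 : 0 < W := Real.log_pos (by norm_num at hM1; linarith)
  have hC0 : 0 < C := by linarith
  have hlq := log_q_ge q hq
  have hlq0 : 0 < Real.log q := by norm_num at hlq; linarith
  have hq0 : (0:ℝ) < q := by
    have : 0 < q := by omega
    exact_mod_cast this
  have l2 : 0 < Real.log 2 := Real.log_pos (by norm_num)
  set E := Real.exp (8 * C * (κ + 1)) with hE
  have hE8 : 9 ≤ E := by
    have : 8 * C * (κ + 1) + 1 ≤ E := Real.add_one_le_exp _
    nlinarith
  have hEW : 0 < E * W := by positivity
  have hV8 : 8 * C ≤ V := by nlinarith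
  have hV25 : 25 * E * W ≤ V := by linarith
  have hV0 : 0 < V := by linarith
  set X := 4 * C * Real.log q / V with hX
  rcases lt_or_ge X (Real.log 2) with hXl | hXl
  · have : G.filter (fun χ => V < Real.log ‖DirichletCharacter.LFunction χ (pt y t)‖) = ∅ := by
      apply Finset.filter_false_of_mem
      intro χ hχ
      have h1 := (H q hq χ (hG χ hχ) (hR χ) y t hy ht).2
      rw [not_lt]
      refine h1.trans ?_
      rw [hX, div_lt_iff₀ hV0] at hXl
      rw [div_le_iff₀ l2]
      nlinarith
    rw [this]
    simp
    positivity
  · have hXq : X ≤ Real.log q := by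
      rw [hX, div_le_iff₀ hV0]
      nlinarith
    have hX0 : 0 < X := by linarith
    set r := ⌊V / (4 * C)⌋₊ with hr
    have hr1 : (r:ℝ) ≤ V / (4 * C) := Nat.floor_le (by positivity)
    have hr2 : V / (8 * C) ≤ r := by
      have h1 := Nat.lt_floor_add_one (V / (4 * C))
      rw [← hr] at h1
      have h2 : 1 ≤ V / (8 * C) := by rw [le_div_iff₀ (by positivity)]; linarith
      have h3 : V / (4 * C) = 2 * (V / (8 * C)) := by field_simp; norm_num
      linarith
    have hbig : ∀ χ ∈ G.filter (fun χ => V < Real.log ‖DirichletCharacter.LFunction χ (pt y t)‖),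
        (V / 2) ^ (2 * r) ≤ ‖Sx χ X (pt y t)‖ ^ (2 * r) := by
      intro χ hχ
      obtain ⟨h1, h2⟩ := Finset.mem_filter.1 hχ
      have h3 := (H q hq χ (hG χ h1) (hR χ) y t hy ht).1 X hXl hXq
      have h4 : C * Real.log q / X = V / 4 := by
        rw [hX]; field_simp
      rw [h4] at h3
      apply pow_le_pow_left₀ (by positivity)
      nlinarith
    have hmom := moment (q := q) (pr ⌈Real.exp X⌉₊) (pr_prime _) (fun p => (wt X p : ℂ) * (p:ℂ) ^ (-(pt y t))) r
      (Real.exp X) (pr_le X) (by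
        rw [← Real.exp_nat_mul, ← Real.exp_log hq0]
        apply Real.exp_le_exp.2
        calc (r:ℝ) * X ≤ V / (4 * C) * X := by gcongr
          _ = Real.log q := by rw [hX]; field_simp)
    have hsq : ∑ p ∈ pr ⌈Real.exp X⌉₊, ‖(wt X p : ℂ) * (p:ℂ) ^ (-(pt y t))‖ ^ 2 ≤ 25 * W := by
      refine le_trans (Finset.sum_le_sum fun p hp => ?_) (prime_sum_bound q hq y hy (pr ⌈Real.exp X⌉₊) (pr_prime _) (fun p hp => by
        have h3 := pr_le X p hp
        have h4 : Real.exp X ≤ q := by rw [← Real.exp_log hq0]; exact Real.exp_le_exp.2 hXq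
        exact_mod_cast h3.trans h4))
      have hp0 := (pr_prime _ p hp).pos
      have hp0' : (0:ℝ) < p := by exact_mod_cast hp0
      rw [norm_mul, Complex.norm_real, Real.norm_of_nonneg (wt_nonneg _ _), Complex.norm_natCast_cpow_of_pos hp0,
        Complex.neg_re, mul_pow]
      have e : ((p:ℝ) ^ (-(pt y t).re)) ^ 2 = (p:ℝ) ^ (-(1 + 2 / Real.log y)) := by
        rw [← Real.rpow_natCast, ← Real.rpow_mul hp0'.le, pt_re]
        congr 1; push_cast; ring
      rw [e]
      exact mul_le_of_le_one_left (by positivity) (pow_le_one₀ (wt_nonneg _ _) (wt_le_one X hX0 p))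
    set g := ((G.filter (fun χ => V < Real.log ‖DirichletCharacter.LFunction χ (pt y t)‖)).card : ℝ) with hg
    have h5 : g * (V / 2) ^ (2 * r) ≤ Nat.totient q * ((V / 4) ^ r * (25 * W) ^ r) := by
      calc g * (V / 2) ^ (2 * r) = ∑ χ ∈ G.filter (fun χ => V < Real.log ‖DirichletCharacter.LFunction χ (pt y t)‖), (V / 2) ^ (2 * r) := by
            rw [Finset.sum_const, nsmul_eq_mul]
        _ ≤ ∑ χ ∈ G.filter (fun χ => V < Real.log ‖DirichletCharacter.LFunction χ (pt y t)‖), ‖Sx χ X (pt y t)‖ ^ (2 * r) :=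
            Finset.sum_le_sum hbig
        _ ≤ ∑ χ : DirichletCharacter ℂ q, ‖Sx χ X (pt y t)‖ ^ (2 * r) :=
            Finset.sum_le_sum_of_subset_of_nonneg (Finset.subset_univ _) (fun _ _ _ => by positivity)
        _ ≤ _ := hmom
        _ ≤ _ := by
            have hf : (r.factorial : ℝ) ≤ (V / 4) ^ r := by
              calc (r.factorial : ℝ) ≤ (r:ℝ) ^ r := by exact_mod_cast Nat.factorial_le_pow r
                _ ≤ (V / 4) ^ r := by
                  apply pow_le_pow_left₀ (by positivity)
                  refine hr1.trans ?_
                  gcongr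
                  linarith
            have hp := pow_le_pow_left₀ (Finset.sum_nonneg fun p _ => by positivity) hsq r
            have hs0 : 0 ≤ (∑ p ∈ pr ⌈Real.exp X⌉₊, ‖(wt X p : ℂ) * (p:ℂ) ^ (-(pt y t))‖ ^ 2) ^ r :=
              pow_nonneg (Finset.sum_nonneg fun p _ => by positivity) r
            exact mul_le_mul_of_nonneg_left (mul_le_mul hf hp hs0 (by positivity)) (by positivity)
    have h6 : (V / 4) ^ r * (25 * W) ^ r ≤ E⁻¹ ^ r * (V / 2) ^ (2 * r) := by
      rw [pow_mul, ← mul_pow, ← mul_pow]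
      apply pow_le_pow_left₀ (by positivity)
      have : 25 * W ≤ E⁻¹ * V := by
        rw [← div_eq_inv_mul, le_div_iff₀ (by positivity)]; linarith
      calc V / 4 * (25 * W) ≤ V / 4 * (E⁻¹ * V) := by gcongr
        _ = _ := by ring
    have h7 : E⁻¹ ^ r ≤ Real.exp (-((κ + 1) * V)) := by
      rw [hE, ← Real.exp_neg, ← Real.exp_nat_mul]
      apply Real.exp_le_exp.2
      have : V ≤ r * (8 * C) := by rwa [div_le_iff₀ (by positivity)] at hr2
      nlinarith
    have h8 : 0 < (V / 2) ^ (2 * r) := by positivity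
    have h9 : g * (V / 2) ^ (2 * r) ≤ (Nat.totient q * Real.exp (-((κ + 1) * V))) * (V / 2) ^ (2 * r) := by
      refine h5.trans ?_
      rw [mul_assoc]
      apply mul_le_mul_of_nonneg_left _ (by positivity)
      exact h6.trans (by gcongr)
    exact le_of_mul_le_mul_right h9 h8

end Stmt5

open Complex Real Finset
namespace Stmt5

lemma moment_one (A : ℝ) (hA : 0 < A) : ∃ C : ℝ, 1 ≤ C ∧ ∀ κ : ℝ, 0 < κ → ∀ (q : ℕ) [NeZero q], 3 ≤ q →
    (∀ χ : DirichletCharacter ℂ q, dirichletRH χ) → ∀ y t : ℝ, 2 ≤ y → |t| ≤ (q:ℝ) ^ A →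
    ∀ G : Finset (DirichletCharacter ℂ q), (∀ χ ∈ G, χ.IsPrimitive) →
    ∑ χ ∈ G, ‖DirichletCharacter.LFunction χ (pt y t)‖ ^ κ ≤ Nat.totient q *
      (min (Real.log y + 1) (Real.log q)) ^ (κ * (25 * Real.exp (8 * C * (κ + 1))) +
        (Real.log 3 + κ * (8 * C + 1)) / Real.log 1.098) := by
  obtain ⟨C, hC, H⟩ := tail A hA
  refine ⟨C, hC, ?_⟩
  intro κ hκ q _ hq hR y t hy ht G hG
  have h1 := H κ hκ q hq hR y t hy ht G hG
  set M := min (Real.log y + 1) (Real.log q) with hM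
  have hM1 := M_ge q hq y hy
  rw [← hM] at hM1
  have hM0 : 1 < M := by norm_num at hM1; linarith
  have hW0 : 0 < Real.log M := Real.log_pos hM0
  have hcard : (G.card : ℝ) ≤ Nat.totient q := by
    have h2 : G.card ≤ Nat.totient q := by
      rw [← DirichletCharacter.card_eq_totient_of_hasEnoughRootsOfUnity ℂ q, Nat.card_eq_fintype_card]
      exact Finset.card_le_univ G
    exact_mod_cast h2
  have h3 := layer G (fun χ => Real.log ‖DirichletCharacter.LFunction χ (pt y t)‖) κ _ (Nat.totient q) hκ
    (by positivity) hcard h1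
  have e1 : ∀ χ ∈ G, ‖DirichletCharacter.LFunction χ (pt y t)‖ ^ κ =
      Real.exp (κ * Real.log ‖DirichletCharacter.LFunction χ (pt y t)‖) := by
    intro χ hχ
    have hne := L_ne_zero_right χ (primitive_ne_one (by omega) χ (hG χ hχ)) (hR χ) (pt y t) (pt_re_bounds y t hy).1
    rw [Real.rpow_def_of_pos (norm_pos_iff.2 hne), mul_comm]
  rw [Finset.sum_congr rfl e1]
  refine h3.trans ?_
  rw [mul_comm 3, mul_assoc]
  apply mul_le_mul_of_nonneg_left _ (by positivity)
  rw [Real.rpow_def_of_pos (by linarith)]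
  have e3 : (3:ℝ) = Real.exp (Real.log 3) := (Real.exp_log (by norm_num)).symm
  have e4 : 3 * Real.exp (κ * (25 * Real.exp (8 * C * (κ + 1)) * Real.log M + 8 * C + 1)) =
      Real.exp (Real.log 3 + κ * (25 * Real.exp (8 * C * (κ + 1)) * Real.log M + 8 * C + 1)) := by
    rw [Real.exp_add, Real.exp_log (by norm_num)]
  rw [e4]
  apply Real.exp_le_exp.2
  have l1 : 0 < Real.log 1.098 := Real.log_pos (by norm_num)
  have l2 : Real.log 1.098 ≤ Real.log M := Real.log_le_log (by norm_num) hM1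
  have l3 : 0 < Real.log 3 := Real.log_pos (by norm_num)
  have h5 : Real.log 3 + κ * (8 * C + 1) ≤ Real.log M * ((Real.log 3 + κ * (8 * C + 1)) / Real.log 1.098) := by
    rw [← mul_div_assoc, le_div_iff₀ l1, mul_comm]
    gcongr
  rw [mul_add (Real.log M)]
  have e6 : Real.log 3 + κ * (25 * Real.exp (8 * C * (κ + 1)) * Real.log M + 8 * C + 1) =
    Real.log M * (κ * (25 * Real.exp (8 * C * (κ + 1)))) + (Real.log 3 + κ * (8 * C + 1)) := by ring
  rw [e6]
  linarith

lemma no_prim_two (χ : DirichletCharacter ℂ 2) : ¬ χ.IsPrimitive := by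
  intro h
  have h1 : χ = 1 := by
    have := DirichletCharacter.card_eq_totient_of_hasEnoughRootsOfUnity ℂ 2
    rw [Nat.totient_two] at this
    have hs := (Nat.card_eq_one_iff_unique.1 this).1
    exact Subsingleton.elim _ _
  exact primitive_ne_one (by norm_num) χ h h1

end Stmt5

open Classical in
theorem stmt5 (k : ℕ) (hk : 0 < k) (a : Fin (2 * k) → ℝ) (A : ℝ)
    (ha : ∀ j, 0 < a j) (hA : 0 < A) :
    ∃ B : ℝ, 0 < B ∧ ∀ (q : ℕ) [NeZero q], 1 < q →
      (∀ χ : DirichletCharacter ℂ q, dirichletRH χ) →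
      ∀ y : ℝ, 2 ≤ y →
      ∀ t : Fin (2 * k) → ℝ, (∀ j, |t j| ≤ (q : ℝ) ^ A) →
      ∑ χ ∈ Finset.univ.filter (fun χ : DirichletCharacter ℂ q => χ.IsPrimitive),
        ∏ j, ‖
          (DirichletCharacter.LFunction χ (1 / 2 + 1 / Real.log y + (t j) * Complex.I))‖ ^ (a j)
      ≤ (Nat.totient q) * (min (Real.log y + 1) (Real.log q)) ^ B := by

  obtain ⟨C, hC, H⟩ := Stmt5.moment_one A hA
  have : Nonempty (Fin (2 * k)) := ⟨⟨0, by omega⟩⟩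
  set κ := ∑ j, a j with hκd
  have hκ : 0 < κ := Finset.sum_pos (fun j _ => ha j) Finset.univ_nonempty
  set B := κ * (25 * Real.exp (8 * C * (κ + 1))) + (Real.log 3 + κ * (8 * C + 1)) / Real.log 1.098 with hB
  have l1 : 0 < Real.log 1.098 := Real.log_pos (by norm_num)
  have l3 : 0 < Real.log 3 := Real.log_pos (by norm_num)
  refine ⟨B, by positivity, ?_⟩
  intro q _ hq1 hR y hy t ht
  rcases Nat.lt_or_ge q 3 with hq | hq
  · have hq2 : q = 2 := by omega
    subst hq2
    have hly : 0 < Real.log y := Real.log_pos (by linarith)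
    have hl2 : 0 < Real.log ((2:ℕ):ℝ) := Real.log_pos (by norm_num)
    have hmin : 0 ≤ min (Real.log y + 1) (Real.log ((2:ℕ):ℝ)) := le_min (by linarith) hl2.le
    rw [Finset.filter_false_of_mem (fun χ _ => Stmt5.no_prim_two χ), Finset.sum_empty]
    positivity
  · set G := Finset.univ.filter (fun χ : DirichletCharacter ℂ q => χ.IsPrimitive) with hG
    have hGp : ∀ χ ∈ G, χ.IsPrimitive := fun χ hχ => (Finset.mem_filter.1 hχ).2
    set RHS := (Nat.totient q : ℝ) * (min (Real.log y + 1) (Real.log q)) ^ B with hRHS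
    have h1 : ∀ j, ∑ χ ∈ G, ‖DirichletCharacter.LFunction χ (Stmt5.pt y (t j))‖ ^ κ ≤ RHS :=
      fun j => H κ hκ q hq hR y (t j) hy (ht j) G hGp
    calc ∑ χ ∈ G, ∏ j, ‖(DirichletCharacter.LFunction χ (1 / 2 + 1 / Real.log y + (t j) * Complex.I))‖ ^ (a j)
        ≤ ∑ χ ∈ G, ∑ j, a j / κ * ‖DirichletCharacter.LFunction χ (Stmt5.pt y (t j))‖ ^ κ := by
          refine Finset.sum_le_sum fun χ _ => ?_
          have hw := Real.geom_mean_le_arith_mean_weighted Finset.univ (fun j => a j / κ)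
            (fun j => ‖DirichletCharacter.LFunction χ (Stmt5.pt y (t j))‖ ^ κ)
            (fun j _ => (div_pos (ha j) hκ).le) (by rw [← Finset.sum_div, div_self hκ.ne'])
            (fun j _ => by positivity)
          refine le_trans (le_of_eq ?_) hw
          refine Finset.prod_congr rfl fun j _ => ?_
          rw [← Real.rpow_mul (norm_nonneg _), mul_div_cancel₀ _ hκ.ne']
          rfl
      _ = ∑ j, a j / κ * ∑ χ ∈ G, ‖DirichletCharacter.LFunction χ (Stmt5.pt y (t j))‖ ^ κ := by
          rw [Finset.sum_comm]
          refine Finset.sum_congr rfl fun j _ => ?_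
          rw [Finset.mul_sum]
      _ ≤ ∑ j, a j / κ * RHS := by
          refine Finset.sum_le_sum fun j _ => ?_
          exact mul_le_mul_of_nonneg_left (h1 j) (div_pos (ha j) hκ).le
      _ = RHS := by
          rw [← Finset.sum_mul, ← Finset.sum_div, div_self hκ.ne', one_mul]
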